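/- arXiv:2101.08973 — 5 statements merged into one kernel-verified Lean document; each statement's English description precedes it below -/
import Mathlib

section
/- (Proposition 3) Suppose Assumptions 1 and 2 hold, each f_i is continuously differentiable on ℝ^p × ℝ^p, the game mappings F_i are L-Lipschitz on ℝ^p × ℝ^p, ∑_{t=0}^∞ ρ(t) = ∞, and the augmented push-sum dynamics are run with these F_i and with the ergodicity hypothesis in force. Then for every player i the sequence x_i(k) converges, as k → ∞, to x*_i, where x* is the unique Nash equilibrium of the aggregative game. -/
open RealInnerProductSpace Pointwise Filter Topology

/-- Backward product `Φ(k,t) = A(k) A(k−1) ⋯ A(k−t)`. -/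
noncomputable def backProd {N : ℕ} (A : ℕ → Matrix (Fin N) (Fin N) ℝ) (k t : ℕ) :
    Matrix (Fin N) (Fin N) ℝ :=
  ((List.range (t + 1)).map fun s => A (k - s)).prod

section GenericLemmas

variable {E : Type*} [NormedAddCommGroup E] [InnerProductSpace ℝ E]

/-- Variational characterization of a nearest point in a convex set. -/
lemma nearest_inner_le {K : Set E} (hK : Convex ℝ K) {u v : E} (hv : v ∈ K)
    (hmin : ∀ w ∈ K, ‖u - v‖ ≤ ‖u - w‖) : ∀ w ∈ K, ⟪u - v, w - v⟫ ≤ 0 := by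
  rw [← norm_eq_iInf_iff_real_inner_le_zero hK hv]
  have : Nonempty K := ⟨⟨v, hv⟩⟩
  apply le_antisymm
  · exact le_ciInf fun w => hmin w w.2
  · exact ciInf_le ⟨0, by rintro _ ⟨w, rfl⟩; positivity⟩ (⟨v, hv⟩ : K)

/-- The projection step inequality. -/
lemma proj_step {K : Set E} (hK : Convex ℝ K) {a g a' : E} (ha : a ∈ K) (ha' : a' ∈ K)
    (hmin : ∀ w ∈ K, ‖a - g - a'‖ ≤ ‖a - g - w‖) :
    ‖a' - a‖ ≤ ‖g‖ ∧
    ∀ u ∈ K, ‖a' - u‖ ^ 2 ≤ ‖a - u‖ ^ 2 - 2 * ⟪g, a - u⟫ + ‖g‖ ^ 2 := by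
  have h := nearest_inner_le hK ha' hmin
  constructor
  · have h1 := h a ha
    have h2 : ‖a' - a‖ ^ 2 ≤ ‖g‖ * ‖a' - a‖ := by
      have e : a - g - a' = -(a' - a) - g := by abel
      have e2 : a - a' = -(a' - a) := by abel
      rw [e, e2, inner_neg_right, inner_sub_left, inner_neg_left, real_inner_self_eq_norm_sq] at h1
      have := real_inner_le_norm (-g) (a' - a)
      rw [inner_neg_left, norm_neg] at this
      linarith
    by_contra hc
    push Not at hc
    have : 0 ≤ ‖g‖ := norm_nonneg _
    nlinarith
  · intro u hu
    have h1 := h u hu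
    have h2 : ‖a - g - u‖ ^ 2 = ‖a - g - a'‖ ^ 2 - 2 * ⟪a - g - a', u - a'⟫ + ‖u - a'‖ ^ 2 := by
      rw [← norm_sub_sq_real]; congr 2; abel
    have h3 : ‖a - g - u‖ ^ 2 = ‖a - u‖ ^ 2 - 2 * ⟪g, a - u⟫ + ‖g‖ ^ 2 := by
      rw [real_inner_comm, ← norm_sub_sq_real]; congr 2; abel
    rw [norm_sub_rev u a'] at h2
    nlinarith [sq_nonneg ‖a - g - a'‖]

/-- Existence for strongly monotone variational inequalities over a compact convex set. -/
lemma vi_exists_strong {K : Set E} (hK : Convex ℝ K) (hKc : IsCompact K) (hKn : K.Nonempty)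
    (G : E → E) (L ε : ℝ) (hL : 0 < L) (hε : 0 < ε)
    (hG : ∀ a ∈ K, ∀ b ∈ K, ‖G a - G b‖ ≤ L * ‖a - b‖)
    (hm : ∀ a ∈ K, ∀ b ∈ K, ε * ‖a - b‖ ^ 2 ≤ ⟪G a - G b, a - b⟫) :
    ∃ a ∈ K, ∀ u ∈ K, 0 ≤ ⟪G a, u - a⟫ := by
  have hP : ∀ u : E, ∃ v ∈ K, ∀ w ∈ K, ⟪u - v, w - v⟫ ≤ 0 := by
    intro u
    obtain ⟨v, hv, hmin⟩ := hKc.exists_isMinOn hKn (f := fun w => ‖u - w‖) (by fun_prop)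
    exact ⟨v, hv, nearest_inner_le hK hv (fun w hw => hmin hw)⟩
  choose P hPK hPi using hP
  have hPne : ∀ u v, ‖P u - P v‖ ≤ ‖u - v‖ := by
    intro u v
    have h1 := hPi u (P v) (hPK v)
    have h2 := hPi v (P u) (hPK u)
    have h3 : ‖P u - P v‖ ^ 2 ≤ ⟪u - v, P u - P v⟫ := by
      have e1 : P v - P u = -(P u - P v) := by abel
      rw [e1, inner_neg_right] at h1
      have e2 : ⟪u - P u, P u - P v⟫ - ⟪v - P v, P u - P v⟫
          = ⟪u - v, P u - P v⟫ - ⟪P u - P v, P u - P v⟫ := by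
        rw [← inner_sub_left, ← inner_sub_left]; congr 1; abel
      rw [real_inner_self_eq_norm_sq] at e2
      linarith
    have h4 := real_inner_le_norm (u - v) (P u - P v)
    by_contra hc
    push Not at hc
    have : 0 ≤ ‖u - v‖ := norm_nonneg _
    nlinarith
  set γ : ℝ := ε / L ^ 2 with hγ
  have hγpos : 0 < γ := by positivity
  have hstrict : ∀ a ∈ K, ∀ b ∈ K, a ≠ b →
      ‖P (a - γ • G a) - P (b - γ • G b)‖ < ‖a - b‖ := by
    intro a ha b hb hab
    refine lt_of_le_of_lt (hPne _ _) ?_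
    have hpos : 0 < ‖a - b‖ := norm_pos_iff.2 (sub_ne_zero.2 hab)
    have e : a - γ • G a - (b - γ • G b) = (a - b) - γ • (G a - G b) := by
      rw [smul_sub]; abel
    rw [e]
    have h1 : ‖(a - b) - γ • (G a - G b)‖ ^ 2 < ‖a - b‖ ^ 2 := by
      rw [norm_sub_sq_real, real_inner_comm, inner_smul_left, norm_smul, Real.norm_of_nonneg hγpos.le]
      have h2 := hm a ha b hb
      have h3 := hG a ha b hb
      have h4 : ‖G a - G b‖ ^ 2 ≤ L ^ 2 * ‖a - b‖ ^ 2 := by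
        rw [← mul_pow]; exact pow_le_pow_left₀ (norm_nonneg _) h3 2
      have h5 : γ * L ^ 2 = ε := by rw [hγ]; field_simp
      have h6 : γ ^ 2 * ‖G a - G b‖ ^ 2 ≤ γ * (ε * ‖a - b‖ ^ 2) := by
        calc _ ≤ γ ^ 2 * (L ^ 2 * ‖a - b‖ ^ 2) := by gcongr
          _ = γ * ((γ * L ^ 2) * ‖a - b‖ ^ 2) := by ring
          _ = _ := by rw [h5]
      have h7 : γ * (ε * ‖a - b‖ ^ 2) ≤ γ * ⟪G a - G b, a - b⟫ := by gcongr
      have h8 : 0 < γ * (ε * ‖a - b‖ ^ 2) := by positivity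
      simp only [conj_trivial]
      rw [mul_pow]
      linarith
    exact lt_of_pow_lt_pow_left₀ 2 (norm_nonneg _) h1
  have hGc : ContinuousOn G K := by
    have : LipschitzOnWith (Real.toNNReal L) G K := by
      apply LipschitzOnWith.of_dist_le_mul
      intro a ha b hb
      rw [dist_eq_norm, dist_eq_norm, Real.coe_toNNReal _ hL.le]
      exact hG a ha b hb
    exact this.continuousOn
  have hPc : Continuous P := by
    have : LipschitzWith 1 P := by
      apply LipschitzWith.of_dist_le_mul
      intro a b
      rw [dist_eq_norm, dist_eq_norm]; simpa using hPne a b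
    exact this.continuous
  obtain ⟨a, ha, hmin⟩ := hKc.exists_isMinOn hKn (f := fun w => ‖P (w - γ • G w) - w‖) (by fun_prop)
  have hfix : P (a - γ • G a) = a := by
    by_contra hne
    have h1 := hstrict _ (hPK (a - γ • G a)) a ha hne
    have h2 : ‖P (a - γ • G a) - a‖ ≤ _ := hmin (hPK (a - γ • G a))
    exact absurd h2 (not_le.2 h1)
  refine ⟨a, ha, fun u hu => ?_⟩
  have h1 := hPi (a - γ • G a) u hu
  rw [hfix] at h1
  have e : a - γ • G a - a = -(γ • G a) := by abel
  rw [e, inner_neg_left, inner_smul_left] at h1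
  simp only [conj_trivial] at h1
  by_contra hc
  push Not at hc
  nlinarith

/-- Existence for monotone Lipschitz variational inequalities over a compact convex set. -/
lemma vi_exists {K : Set E} (hK : Convex ℝ K) (hKc : IsCompact K) (hKn : K.Nonempty)
    (G : E → E) (L : ℝ) (hL : 0 < L)
    (hG : ∀ a ∈ K, ∀ b ∈ K, ‖G a - G b‖ ≤ L * ‖a - b‖)
    (hm : ∀ a ∈ K, ∀ b ∈ K, 0 ≤ ⟪G a - G b, a - b⟫) :
    ∃ a ∈ K, ∀ u ∈ K, 0 ≤ ⟪G a, u - a⟫ := by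
  have key : ∀ m : ℕ, ∃ a ∈ K, ∀ u ∈ K, 0 ≤ ⟪G a + (1 / ((m : ℝ) + 1)) • a, u - a⟫ := by
    intro m
    have hε : (0 : ℝ) < 1 / ((m : ℝ) + 1) := by positivity
    set ε : ℝ := 1 / ((m : ℝ) + 1)
    have e : ∀ a b : E, G a + ε • a - (G b + ε • b) = (G a - G b) + ε • (a - b) := by
      intro a b; rw [smul_sub]; abel
    refine vi_exists_strong hK hKc hKn (fun a => G a + ε • a) (L + ε) ε (by positivity) hε ?_ ?_
    · intro a ha b hb
      simp only [e]
      refine (norm_add_le _ _).trans ?_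
      rw [norm_smul, Real.norm_of_nonneg hε.le]
      have := hG a ha b hb
      linarith
    · intro a ha b hb
      simp only [e]
      rw [inner_add_left, inner_smul_left, real_inner_self_eq_norm_sq]
      have := hm a ha b hb
      simp only [conj_trivial]
      linarith
  choose a haK ha using key
  obtain ⟨b, hb, ψ, hψ, hlim⟩ := hKc.tendsto_subseq haK
  refine ⟨b, hb, fun u hu => ?_⟩
  have hGc : ContinuousOn G K := by
    have : LipschitzOnWith (Real.toNNReal L) G K := by
      apply LipschitzOnWith.of_dist_le_mul
      intro a ha b hb
      rw [dist_eq_norm, dist_eq_norm, Real.coe_toNNReal _ hL.le]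
      exact hG a ha b hb
    exact this.continuousOn
  have h1 : Tendsto (fun m => G (a (ψ m))) atTop (𝓝 (G b)) := by
    have := (hGc b hb).tendsto
    refine this.comp ?_
    exact tendsto_nhdsWithin_iff.2 ⟨hlim, Eventually.of_forall fun m => haK _⟩
  have h2 : Tendsto (fun m => (1 / ((ψ m : ℝ) + 1))) atTop (𝓝 0) :=
    tendsto_one_div_add_atTop_nhds_zero_nat.comp hψ.tendsto_atTop
  have h3 : Tendsto (fun m => ⟪G (a (ψ m)) + (1 / ((ψ m : ℝ) + 1)) • a (ψ m), u - a (ψ m)⟫)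
      atTop (𝓝 ⟪G b + (0 : ℝ) • b, u - b⟫) :=
    (h1.add (h2.smul hlim)).inner (tendsto_const_nhds.sub hlim)
  have h4 := ge_of_tendsto' h3 (fun m => ha (ψ m) u hu)
  simpa using h4

/-- Unrolling of the linear recursion driven by increments `d`. -/
lemma pushsum_unroll {N : ℕ} (A : ℕ → Matrix (Fin N) (Fin N) ℝ)
    (v d : ℕ → Fin N → E) (h0 : ∀ j, v 0 j = d 0 j)
    (hv : ∀ k j, v (k + 1) j = ∑ m, A k j m • v k m + d (k + 1) j) (k : ℕ) (j : Fin N) :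
    ∑ m, A k j m • v k m
      = ∑ t ∈ Finset.range (k + 1), ∑ m, backProd A k (k - t) j m • d t m := by
  have hb0 : ∀ k, backProd A k 0 = A k := by
    intro k; simp [backProd]
  have hbs : ∀ k s, backProd A (k + 1) (s + 1) = A (k + 1) * backProd A k s := by
    intro k s
    unfold backProd
    rw [List.range_succ_eq_map, List.map_cons, List.prod_cons, List.map_map]
    simp [Function.comp_def]
  induction k generalizing j with
  | zero => simp [hb0, h0]
  | succ k ih =>
    rw [Finset.sum_range_succ]
    have e1 : ∀ t ∈ Finset.range (k + 1), ∑ m, backProd A (k + 1) (k + 1 - t) j m • d t m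
        = ∑ q, A (k + 1) j q • ∑ m, backProd A k (k - t) q m • d t m := by
      intro t ht
      have : k + 1 - t = (k - t) + 1 := by
        have := Finset.mem_range.1 ht; omega
      rw [this, hbs]
      simp only [Matrix.mul_apply, Finset.smul_sum, Finset.sum_smul, smul_smul]
      exact Finset.sum_comm
    rw [Finset.sum_congr rfl e1, Finset.sum_comm]
    simp only [← Finset.smul_sum]
    simp only [← ih, Nat.sub_self, hb0]
    rw [← Finset.sum_add_distrib]
    refine Finset.sum_congr rfl fun m _ => ?_
    rw [hv k m, smul_add]

/-- Consensus error estimate from ergodicity. -/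
lemma pushsum_err {N : ℕ} (A : ℕ → Matrix (Fin N) (Fin N) ℝ)
    (v d : ℕ → Fin N → E) (h0 : ∀ j, v 0 j = d 0 j)
    (hv : ∀ k j, v (k + 1) j = ∑ m, A k j m • v k m + d (k + 1) j)
    (B lam : ℝ) (φ : ℕ → Fin N → ℝ)
    (herg : ∀ k t, t ≤ k → ∀ i j : Fin N, |backProd A k t i j - φ k i| ≤ B * lam ^ t)
    (k : ℕ) (j : Fin N) :
    ‖∑ m, A k j m • v k m - φ k j • ∑ t ∈ Finset.range (k + 1), ∑ m, d t m‖
      ≤ ∑ t ∈ Finset.range (k + 1), B * lam ^ (k - t) * ∑ m, ‖d t m‖ := by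
  rw [pushsum_unroll A v d h0 hv, Finset.smul_sum, ← Finset.sum_sub_distrib]
  refine (norm_sum_le _ _).trans (Finset.sum_le_sum fun t ht => ?_)
  rw [Finset.smul_sum, ← Finset.sum_sub_distrib, Finset.mul_sum]
  refine (norm_sum_le _ _).trans (Finset.sum_le_sum fun m _ => ?_)
  rw [← sub_smul, norm_smul]
  gcongr
  exact herg k (k - t) (Nat.sub_le _ _) j m

end GenericLemmas

/-- Deterministic quasi-Fejér argument. -/
lemma quasi_fejer (W a e : ℕ → ℝ) (hWb : ∃ M, ∀ k, M ≤ W k) (ha : ∀ k, 0 ≤ a k)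
    (he : Summable e) (he0 : ∀ k, 0 ≤ e k) (h : ∀ k, W (k + 1) ≤ W k - a k + e k) :
    (∃ c, Tendsto W atTop (𝓝 c)) ∧ Summable a := by
  obtain ⟨M, hM⟩ := hWb
  set S : ℕ → ℝ := fun k => ∑ t ∈ Finset.range k, e t with hS
  have hSt : Tendsto S atTop (𝓝 (∑' t, e t)) := he.hasSum.tendsto_sum_nat
  have hSle : ∀ k, S k ≤ ∑' t, e t := fun k => he.sum_le_tsum _ (fun t _ => he0 t)
  have hanti : Antitone (fun k => W k - S k) := by
    apply antitone_nat_of_succ_le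
    intro k
    simp only [hS, Finset.sum_range_succ]
    have := h k; have := ha k
    linarith
  have hb : BddBelow (Set.range fun k => W k - S k) := by
    refine ⟨M - ∑' t, e t, ?_⟩
    rintro _ ⟨k, rfl⟩
    have := hM k; have := hSle k
    simp only; linarith
  constructor
  · have := (tendsto_atTop_ciInf hanti hb).add hSt
    exact ⟨_, by simpa using this⟩
  · apply summable_of_sum_range_le (c := W 0 - M + ∑' t, e t) ha
    intro k
    have h1 : ∀ k, ∑ t ∈ Finset.range k, a t ≤ W 0 - W k + S k := by
      intro k
      induction k with
      | zero => simp [hS]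
      | succ k ih =>
        simp only [hS, Finset.sum_range_succ] at *
        have := h k
        linarith
    have := h1 k; have := hM k; have := hSle k
    linarith

/-- Summability of a slowed-down sequence. -/
lemma summable_div_comp (g : ℕ → ℝ) (hg : Summable g) (hg0 : ∀ t, 0 ≤ g t) (s c : ℕ) (hs : 1 ≤ s) :
    Summable fun t => g ((t - c) / s) := by
  rw [← summable_nat_add_iff c]
  simp only [Nat.add_sub_cancel]
  have hpart : ∀ M, ∑ t ∈ Finset.range (M * s), g (t / s) = s * ∑ m ∈ Finset.range M, g m := by
    intro M
    induction M with
    | zero => simp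
    | succ M ih =>
      rw [Nat.succ_mul, Finset.sum_range_add, ih, Finset.sum_range_succ, mul_add]
      congr 1
      rw [Finset.sum_congr rfl (g := fun _ => g M)]
      · simp
      · intro t ht
        congr 1
        rw [Nat.mul_comm, Nat.mul_add_div (by omega), Nat.div_eq_of_lt (Finset.mem_range.1 ht)]
        simp
  apply summable_of_sum_range_le (c := s * ∑' t, g t) (fun t => hg0 _)
  intro k
  calc ∑ t ∈ Finset.range k, g (t / s) ≤ ∑ t ∈ Finset.range (k * s), g (t / s) := by
        apply Finset.sum_le_sum_of_subset_of_nonneg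
        · apply Finset.range_mono; nlinarith
        · intros; exact hg0 _
    _ = s * ∑ m ∈ Finset.range k, g m := hpart k
    _ ≤ _ := by
        gcongr
        exact hg.sum_le_tsum _ (fun t _ => hg0 t)

/-- Geometric convolution against an antitone square-summable sequence. -/
lemma summable_conv (q : ℕ → ℝ) (hq : Antitone q) (hq0 : ∀ t, 0 < q t)
    (hqs : Summable fun t => q t ^ 2) (lam : ℝ) (h0 : 0 < lam) (h1 : lam < 1) :
    Summable fun k => q k * ∑ t ∈ Finset.range (k + 1), lam ^ (k - t) * q t := by
  have hgeo := summable_geometric_of_lt_one h0.le h1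
  have hc : Summable fun k => ∑ t ∈ Finset.range (k + 1), q t ^ 2 * lam ^ (k - t) := by
    refine (summable_norm_sum_mul_range_of_summable_norm (f := fun t => q t ^ 2)
      (g := fun t => lam ^ t) ?_ ?_).of_norm
    · exact hqs.norm
    · exact hgeo.norm
  refine Summable.of_nonneg_of_le ?_ ?_ hc
  · intro k
    have := hq0 k
    refine mul_nonneg this.le (Finset.sum_nonneg fun t _ => ?_)
    have := hq0 t
    positivity
  · intro k
    rw [Finset.mul_sum]
    refine Finset.sum_le_sum fun t ht => ?_
    have h2 : q k ≤ q t := hq (by have := Finset.mem_range.1 ht; omega)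
    have := hq0 t
    calc q k * (lam ^ (k - t) * q t) ≤ q t * (lam ^ (k - t) * q t) := by gcongr
      _ = _ := by ring

section Game

/-- One-sided derivative bound. -/
lemma deriv_le_of_le {ψ : ℝ → ℝ} {m C : ℝ} (h : HasDerivAt ψ m 0)
    (hle : ∀ s, 0 < s → s ≤ 1 → ψ s - ψ 0 ≤ s * C) : m ≤ C := by
  have h1 := (hasDerivAt_iff_tendsto_slope.1 h).mono_left
    (nhdsWithin_mono (0 : ℝ) (fun s (hs : s ∈ Set.Ioi (0 : ℝ)) => (ne_of_gt hs : s ≠ 0)))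
  refine le_of_tendsto h1 ?_
  have h2 : ∀ᶠ s in 𝓝[>] (0 : ℝ), s ∈ Set.Ioo (0 : ℝ) 1 := Ioo_mem_nhdsGT one_pos
  filter_upwards [h2] with s hs
  rw [slope_def_field, sub_zero, div_le_iff₀ hs.1]
  have := hle s hs.1 hs.2.le
  linarith

variable {E : Type*} [NormedAddCommGroup E] [InnerProductSpace ℝ E]

/-- Directional derivative of a player's cost along a segment. -/
lemma path_deriv [CompleteSpace E] (f : E → E → ℝ) (hf : ContDiff ℝ 1 (fun q : E × E => f q.1 q.2))
    (c : ℝ) (a b d : E) :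
    HasDerivAt (fun s : ℝ => f (a + s • d) (c • (a + s • d) + b))
      ⟪gradient (fun u => f u (c • a + b)) a + c • gradient (fun u => f a u) (c • a + b), d⟫ 0 := by
  set z := c • a + b with hz
  have hd : HasFDerivAt (fun q : E × E => f q.1 q.2) (fderiv ℝ (fun q : E × E => f q.1 q.2) (a, z))
      (a, z) := (hf.differentiable (by norm_num) (a, z)).hasFDerivAt
  set D := fderiv ℝ (fun q : E × E => f q.1 q.2) (a, z)
  have h1 : HasFDerivAt (fun u => f u z) (D.comp (ContinuousLinearMap.inl ℝ E E)) a := by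
    have : HasFDerivAt (fun u : E => (u, z)) (ContinuousLinearMap.inl ℝ E E) a :=
      hasFDerivAt_prodMk_left a z
    exact HasFDerivAt.comp a hd this
  have h2 : HasFDerivAt (fun u => f a u) (D.comp (ContinuousLinearMap.inr ℝ E E)) z := by
    have : HasFDerivAt (fun u : E => (a, u)) (ContinuousLinearMap.inr ℝ E E) z :=
      hasFDerivAt_prodMk_right a z
    exact HasFDerivAt.comp z hd this
  have g1 : ⟪gradient (fun u => f u z) a, d⟫ = D (d, 0) := by
    rw [gradient, InnerProductSpace.toDual_symm_apply, h1.fderiv]; simp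
  have g2 : ⟪gradient (fun u => f a u) z, d⟫ = D (0, d) := by
    rw [gradient, InnerProductSpace.toDual_symm_apply, h2.fderiv]; simp
  rw [inner_add_left, inner_smul_left, g1, g2]
  have hp1 : HasDerivAt (fun s : ℝ => a + s • d) d 0 := by
    simpa using ((hasDerivAt_id (0 : ℝ)).smul_const d).const_add a
  have hp2 : HasDerivAt (fun s : ℝ => c • (a + s • d) + b) (c • d) 0 :=
    (hp1.const_smul c).add_const b
  have hp := hp1.prodMk hp2
  have hd' : HasFDerivAt (fun q : E × E => f q.1 q.2) D
      ((fun s : ℝ => (a + s • d, c • (a + s • d) + b)) 0) := by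
    simpa [hz] using hd
  have := hd'.comp_hasDerivAt (0 : ℝ) hp
  have e : ((d, c • d) : E × E) = (d, 0) + c • (0, d) := by simp
  rw [e, map_add, map_smul] at this
  simpa [Function.comp_def] using this

/-- First-order sufficiency and necessity for a player. -/
lemma player_opt [CompleteSpace E] (f : E → E → ℝ) (hf : ContDiff ℝ 1 (fun q : E × E => f q.1 q.2))
    (c : ℝ) (b : E) (K : Set E) (hK : Convex ℝ K)
    (hconv : ConvexOn ℝ K (fun u => f u (c • u + b))) (a : E) (ha : a ∈ K) :
    (∀ u ∈ K, f a (c • a + b) ≤ f u (c • u + b)) ↔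
    (∀ u ∈ K, 0 ≤ ⟪gradient (fun u => f u (c • a + b)) a
      + c • gradient (fun u => f a u) (c • a + b), u - a⟫) := by
  constructor
  · intro h u hu
    have hd := path_deriv f hf c a b (u - a)
    have h1 := deriv_le_of_le (C := 0) hd.neg (by
      intro s hs hs1
      have := h (a + s • (u - a)) (hK.add_smul_sub_mem ha hu ⟨hs.le, hs1⟩)
      simp only [Pi.neg_apply, zero_smul, add_zero, mul_zero]
      linarith)
    linarith
  · intro h u hu
    have hd := path_deriv f hf c a b (u - a)
    have h1 := deriv_le_of_le (C := f u (c • u + b) - f a (c • a + b)) hd (by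
      intro s hs hs1
      have := hconv.2 ha hu (sub_nonneg.2 hs1) hs.le (by ring)
      have e : (1 - s) • a + s • u = a + s • (u - a) := by
        rw [sub_smul, smul_sub, one_smul]; abel
      rw [e] at this
      simp only [zero_smul, add_zero, smul_eq_mul] at *
      linarith)
    have := h u hu
    linarith

/-- Existence of a solution of the game's variational inequality. -/
lemma game_vi (n : ℕ) (X : Fin n → Set E)
    (hXne : ∀ i, (X i).Nonempty) (hXconv : ∀ i, Convex ℝ (X i)) (hXcomp : ∀ i, IsCompact (X i))
    (F : Fin n → E → E → E) (L : ℝ) (hL : 0 < L)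
    (hFlip : ∀ i a a' z z', ‖F i a z - F i a' z'‖ ≤ L * (‖a - a'‖ + ‖z - z'‖))
    (hmono : ∀ a a' : Fin n → E, (∀ i, a i ∈ X i) → (∀ i, a' i ∈ X i) → a ≠ a' →
      0 < ∑ i, ⟪F i (a i) ((n : ℝ)⁻¹ • ∑ j, a j) -
                F i (a' i) ((n : ℝ)⁻¹ • ∑ j, a' j), a i - a' i⟫) :
    ∃ a : Fin n → E, (∀ i, a i ∈ X i) ∧
      ∀ i, ∀ u ∈ X i, 0 ≤ ⟪F i (a i) ((n : ℝ)⁻¹ • ∑ j, a j), u - a i⟫ := by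
  set K : Set (PiLp 2 (fun _ : Fin n => E)) := {a | ∀ i, a i ∈ X i} with hKdef
  have hKc : IsCompact K := by
    have h1 : IsCompact (Set.univ.pi X) := isCompact_univ_pi hXcomp
    have h2 := h1.image (PiLp.continuous_toLp 2 (fun _ : Fin n => E))
    convert h2 using 1
    ext a
    simp only [hKdef, Set.mem_ofPred_eq, Set.mem_image, Set.mem_pi, Set.mem_univ, true_implies]
    constructor
    · intro h; exact ⟨fun i => a i, h, rfl⟩
    · rintro ⟨b, hb, rfl⟩; exact hb
  have hKconv : Convex ℝ K := by
    intro a ha b hb s t hs ht hst i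
    exact hXconv i (ha i) (hb i) hs ht hst
  have hKn : K.Nonempty := ⟨WithLp.toLp 2 (fun i => (hXne i).some), fun i => (hXne i).some_mem⟩
  set G : PiLp 2 (fun _ : Fin n => E) → PiLp 2 (fun _ : Fin n => E) :=
    fun a => WithLp.toLp 2 (fun i => F i (a i) ((n : ℝ)⁻¹ • ∑ j, a j)) with hGdef
  have hGi : ∀ a i, G a i = F i (a i) ((n : ℝ)⁻¹ • ∑ j, a j) := fun a i => rfl
  obtain ⟨a, ha, hvi⟩ := vi_exists hKconv hKc hKn G (n * (2 * L) + 1) (by positivity) (by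
      intro a _ b _
      have h1 : ∀ i, ‖G a i - G b i‖ ≤ 2 * L * ‖a - b‖ := by
        intro i
        rw [hGi, hGi]
        refine (hFlip _ _ _ _ _).trans ?_
        have h2 : ∀ i, ‖a i - b i‖ ≤ ‖a - b‖ := fun i => PiLp.norm_apply_le (a - b) i
        have h3 : ‖(n : ℝ)⁻¹ • ∑ j, a j - (n : ℝ)⁻¹ • ∑ j, b j‖ ≤ ‖a - b‖ := by
          rw [← smul_sub, ← Finset.sum_sub_distrib, norm_smul, norm_inv, Real.norm_natCast]
          have hn : (0 : ℝ) < n := by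
            have := i.pos; exact_mod_cast this
          rw [inv_mul_le_iff₀ hn]
          refine (norm_sum_le _ _).trans ?_
          refine (Finset.sum_le_sum fun j _ => h2 j).trans ?_
          simp
        have := h2 i
        calc L * (‖a i - b i‖ + _) ≤ L * (‖a - b‖ + ‖a - b‖) := by gcongr
          _ = _ := by ring
      have h4 : ‖G a - G b‖ ≤ ∑ i, ‖G a i - G b i‖ := by
        refine le_of_sq_le_sq ?_ (Finset.sum_nonneg fun i _ => norm_nonneg _)
        rw [PiLp.norm_sq_eq_of_L2]
        exact Finset.sum_sq_le_sq_sum_of_nonneg fun i _ => norm_nonneg _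
      refine h4.trans ((Finset.sum_le_sum fun i _ => h1 i).trans ?_)
      simp only [Finset.sum_const, Finset.card_univ, Fintype.card_fin, nsmul_eq_mul]
      nlinarith [norm_nonneg (a - b)]) (by
      intro a ha b hb
      by_cases hab : a = b
      · simp [hab]
      · rw [PiLp.inner_apply]
        refine (hmono (fun i => a i) (fun i => b i) ha hb ?_).le
        intro h
        exact hab (PiLp.ext fun i => congrFun h i))
  refine ⟨fun i => a i, ha, fun i u hu => ?_⟩
  have h1 := hvi (WithLp.toLp 2 (Function.update (fun i => a i) i u)) (by
    intro j
    by_cases hj : j = i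
    · subst hj; simpa using hu
    · simpa [hj] using ha j)
  rw [PiLp.inner_apply, Finset.sum_eq_single i] at h1
  · simpa [hGi] using h1
  · intro j _ hj
    simp [hj]
  · simp

end Game

section Dynamics

lemma sum_dite_lt {M : Type*} [AddCommMonoid M] {n N : ℕ} (hnN : n ≤ N) (g : Fin n → M) :
    ∑ j : Fin N, (if h : (j : ℕ) < n then g ⟨j, h⟩ else 0) = ∑ i, g i := by
  obtain ⟨m, rfl⟩ := Nat.exists_eq_add_of_le hnN
  rw [Fin.sum_univ_add]
  simp

variable {E : Type*} [NormedAddCommGroup E] [InnerProductSpace ℝ E]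

/-- Tracking error of the push-sum estimate of the aggregate. -/
lemma z_err (n N : ℕ) (hn : 0 < n) (hnN : n ≤ N)
    (A : ℕ → Matrix (Fin N) (Fin N) ℝ)
    (v w : ℕ → Fin N → E) (y : ℕ → Fin N → ℝ) (x z : ℕ → Fin n → E)
    (hv0p : ∀ i : Fin n, v 0 (Fin.castLE hnN i) = x 0 i)
    (hy0p : ∀ i : Fin n, y 0 (Fin.castLE hnN i) = 1)
    (hv0v : ∀ j : Fin N, n ≤ (j : ℕ) → v 0 j = 0)
    (hy0v : ∀ j : Fin N, n ≤ (j : ℕ) → y 0 j = 0)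
    (hw : ∀ k, ∀ j : Fin N, w (k + 1) j = ∑ m, A k j m • v k m)
    (hy : ∀ k, ∀ j : Fin N, y (k + 1) j = ∑ m, A k j m * y k m)
    (hz : ∀ k, ∀ i : Fin n,
      z (k + 1) i = (y (k + 1) (Fin.castLE hnN i))⁻¹ • w (k + 1) (Fin.castLE hnN i))
    (hv : ∀ k, ∀ j : Fin N, v (k + 1) j =
      w (k + 1) j + (if h : (j : ℕ) < n then x (k + 1) ⟨j, h⟩ - x k ⟨j, h⟩ else 0))
    (B' lam η : ℝ) (hB' : 0 < B') (hlam : lam ∈ Set.Ioo (0 : ℝ) 1)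
    (hη : η ∈ Set.Ioc (0 : ℝ) 1)
    (φvec : ℕ → Fin N → ℝ)
    (herg : ∀ k t, t ≤ k → ∀ i j : Fin N, |backProd A k t i j - φvec k i| ≤ B' * lam ^ t)
    (hylb : ∀ i : Fin n, ∀ k, 1 ≤ k → η ≤ y k (Fin.castLE hnN i))
    (q : ℕ → ℝ) (hq : ∀ t, 0 < q t) (C R : ℝ) (hC : 0 ≤ C) (hR : 0 ≤ R)
    (hδ0 : ∑ i, ‖x 0 i‖ ≤ C * q 0)
    (hδ : ∀ t, ∑ i, ‖x (t + 1) i - x t i‖ ≤ C * q (t + 1))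
    (hbar : ∀ k, ‖(n : ℝ)⁻¹ • ∑ j, x k j‖ ≤ R) :
    ∃ C', 0 ≤ C' ∧ ∀ k i, ‖z (k + 1) i - (n : ℝ)⁻¹ • ∑ j, x k j‖
      ≤ C' * ∑ t ∈ Finset.range (k + 1), lam ^ (k - t) * q t := by
  have hn0 : (n : ℝ) ≠ 0 := by positivity
  have hl0 := hlam.1
  set d : ℕ → Fin N → E := fun t j => if h : (j : ℕ) < n then
    (match t with
      | 0 => x 0 ⟨j, h⟩
      | t + 1 => x (t + 1) ⟨j, h⟩ - x t ⟨j, h⟩) else 0 with hd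
  have hd0 : ∀ j, v 0 j = d 0 j := by
    intro j
    by_cases h : (j : ℕ) < n
    · simp only [hd, h, dif_pos]
      exact hv0p ⟨j, h⟩
    · simp only [hd, h, dif_neg, not_false_eq_true]
      exact hv0v j (not_lt.1 h)
  have hdv : ∀ k j, v (k + 1) j = ∑ m, A k j m • v k m + d (k + 1) j := by
    intro k j; rw [hv, hw]
  have hsum0 : ∑ j, d 0 j = ∑ i, x 0 i := sum_dite_lt hnN (fun i => x 0 i)
  have hsums : ∀ t, ∑ j, d (t + 1) j = ∑ i, (x (t + 1) i - x t i) := fun t =>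
    sum_dite_lt hnN (fun i => x (t + 1) i - x t i)
  have hn0' : ∑ j, ‖d 0 j‖ = ∑ i, ‖x 0 i‖ := by
    rw [← sum_dite_lt hnN (fun i => ‖x 0 i‖)]
    refine Finset.sum_congr rfl fun j _ => ?_
    simp only [hd]; split_ifs <;> simp
  have hns' : ∀ t, ∑ j, ‖d (t + 1) j‖ = ∑ i, ‖x (t + 1) i - x t i‖ := by
    intro t
    rw [← sum_dite_lt hnN (fun i => ‖x (t + 1) i - x t i‖)]
    refine Finset.sum_congr rfl fun j _ => ?_
    simp only [hd]; split_ifs <;> simp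
  have hdb : ∀ t, ∑ j, ‖d t j‖ ≤ C * q t := by
    intro t
    cases t with
    | zero => rw [hn0']; exact hδ0
    | succ t => rw [hns']; exact hδ t
  have htot : ∀ k, ∑ t ∈ Finset.range (k + 1), ∑ j, d t j = ∑ i, x k i := by
    intro k
    induction k with
    | zero => simp [hsum0]
    | succ k ih =>
      rw [Finset.sum_range_succ, ih, hsums, Finset.sum_sub_distrib]; abel
  set S : ℕ → ℝ := fun k => ∑ t ∈ Finset.range (k + 1), lam ^ (k - t) * q t with hS
  have hwerr : ∀ k j, ‖w (k + 1) j - φvec k j • ∑ i, x k i‖ ≤ B' * C * S k := by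
    intro k j
    have := pushsum_err A v d hd0 hdv B' lam φvec herg k j
    rw [htot, ← hw] at this
    refine this.trans ?_
    rw [hS, Finset.mul_sum]
    refine Finset.sum_le_sum fun t _ => ?_
    calc B' * lam ^ (k - t) * ∑ m, ‖d t m‖ ≤ B' * lam ^ (k - t) * (C * q t) := by
          gcongr; exact hdb t
      _ = _ := by ring
  -- the scalar weights
  set e : ℕ → Fin N → ℝ := fun t j => if (t = 0 ∧ (j : ℕ) < n) then 1 else 0 with he
  have he0 : ∀ j, y 0 j = e 0 j := by
    intro j
    by_cases h : (j : ℕ) < n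
    · simp only [he, h]
      simpa using hy0p ⟨j, h⟩
    · simp only [he, h]
      simpa using hy0v j (not_lt.1 h)
  have hey : ∀ k j, y (k + 1) j = ∑ m, A k j m • y k m + e (k + 1) j := by
    intro k j; rw [hy]; simp [he]
  have hes0 : ∑ j, e 0 j = n := by
    have := sum_dite_lt hnN (fun _ : Fin n => (1 : ℝ))
    simpa [he] using this
  have hes : ∀ t, ∑ j, e (t + 1) j = 0 := by intro t; simp [he]
  have henn : ∀ t j, ‖e t j‖ = e t j := by
    intro t j
    apply Real.norm_of_nonneg
    simp only [he]; split_ifs <;> norm_num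
  have hyerr : ∀ k j, |y (k + 1) j - φvec k j * n| ≤ B' * lam ^ k * n := by
    intro k j
    have := pushsum_err A y e he0 hey B' lam φvec herg k j
    simp only [henn, smul_eq_mul] at this
    rw [Finset.sum_range_succ', Finset.sum_range_succ', ← hy] at this
    simp only [hes, hes0] at this
    simpa using this
  have hSk : ∀ k, lam ^ k * q 0 ≤ S k := by
    intro k
    have := Finset.single_le_sum (f := fun t => lam ^ (k - t) * q t)
      (s := Finset.range (k + 1)) (fun t _ => by have := hq t; positivity)
      (Finset.mem_range.2 (Nat.succ_pos k))
    simpa using this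
  have hq0 := hq 0
  have hηp := hη.1
  refine ⟨η⁻¹ * (B' * C + B' * n * R / q 0), by positivity, fun k i => ?_⟩
  set j := Fin.castLE hnN i
  set xb := (n : ℝ)⁻¹ • ∑ j, x k j with hxb
  have hyl : η ≤ y (k + 1) j := hylb i (k + 1) (by omega)
  have hypos : 0 < y (k + 1) j := lt_of_lt_of_le hηp hyl
  have hxs : ∑ i, x k i = (n : ℝ) • xb := by rw [hxb, smul_inv_smul₀ hn0]
  have e1 : z (k + 1) i - xb = (y (k + 1) j)⁻¹ • (w (k + 1) j - y (k + 1) j • xb) := by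
    rw [hz, smul_sub, inv_smul_smul₀ hypos.ne']
  have e2 : ‖w (k + 1) j - y (k + 1) j • xb‖ ≤ B' * C * S k + B' * lam ^ k * n * R := by
    have : w (k + 1) j - y (k + 1) j • xb =
        (w (k + 1) j - φvec k j • ∑ i, x k i) - (y (k + 1) j - φvec k j * n) • xb := by
      rw [hxs, sub_smul, mul_smul]; abel
    rw [this]
    refine (norm_sub_le _ _).trans ?_
    rw [norm_smul, Real.norm_eq_abs]
    have h1 := hwerr k j
    have h2 : |y (k + 1) j - φvec k j * n| * ‖xb‖ ≤ (B' * lam ^ k * n) * R :=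
      mul_le_mul (hyerr k j) (hbar k) (norm_nonneg _) (by positivity)
    linarith
  rw [e1, norm_smul, norm_inv, Real.norm_of_nonneg hypos.le]
  have h3 : B' * lam ^ k * n * R ≤ B' * n * R / q 0 * S k := by
    calc B' * lam ^ k * n * R = B' * n * R / q 0 * (lam ^ k * q 0) := by field_simp
      _ ≤ _ := by gcongr; exact hSk k
  calc (y (k + 1) j)⁻¹ * ‖w (k + 1) j - y (k + 1) j • xb‖
      ≤ η⁻¹ * (B' * C * S k + B' * n * R / q 0 * S k) := by
        gcongr; linarith
    _ = _ := by ring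

/-- Properties of the counters and stepsizes. -/
lemma counters (n : ℕ) (hn : 0 < n) (Aset : ℕ → Finset (Fin n)) (σ1 : ℕ) (hσ1 : 1 ≤ σ1)
    (hcover : ∀ k, ∀ i : Fin n, ∃ u, k + 1 ≤ u ∧ u ≤ k + σ1 ∧ i ∈ Aset u)
    (l : Fin n → ℕ → ℕ) (σ2 : ℕ)
    (hl0 : ∀ i, l i 0 = 0)
    (hlact : ∀ i k, i ∈ Aset k → l i k + 1 ≤ l i (k + 1) ∧ l i (k + 1) ≤ l i k + σ2)
    (hlstay : ∀ i k, i ∉ Aset k → l i (k + 1) = l i k)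
    (ρ : ℕ → ℝ) (hρpos : ∀ t, 0 < ρ t) (hρa : Antitone ρ)
    (α : Fin n → ℕ → ℝ)
    (hα : ∀ i k, α i k = ∑ t ∈ Finset.Ico (l i k) (l i (k + 1)), ρ t)
    (hlgap : ∀ i j : Fin n, ∀ k, l i k ≤ l j k + σ2)
    (hρdiv : ¬ Summable ρ) :
    (∀ i k, 0 ≤ α i k) ∧ (∀ i k, i ∉ Aset k → α i k = 0) ∧
    (∀ i k, α i k ≤ σ2 * ρ ((k + 1 - 2) / σ1)) ∧
    (∃ D : Fin n → ℕ → ℝ, (∀ i k, α i k = α ⟨0, hn⟩ k + D i (k + 1) - D i k) ∧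
      ∀ i k, |D i k| ≤ σ2 * ρ ((k - 2) / σ1)) ∧
    ¬ Summable (α ⟨0, hn⟩) := by
  have hstep : ∀ i k, l i k ≤ l i (k + 1) ∧ l i (k + 1) ≤ l i k + σ2 := by
    intro i k
    by_cases h : i ∈ Aset k
    · have := hlact i k h; omega
    · have := hlstay i k h; omega
  have hmon : ∀ i, Monotone (l i) := fun i => monotone_nat_of_le_succ fun k => (hstep i k).1
  have hm : ∀ i m, m ≤ l i (1 + m * σ1) := by
    intro i m
    induction m with
    | zero => simp
    | succ m ih =>
      obtain ⟨u, hu1, hu2, hu⟩ := hcover (m * σ1) i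
      have h1 := hmon i (show 1 + m * σ1 ≤ u by omega)
      have h2 := (hlact i u hu).1
      have h3 := hmon i (show u + 1 ≤ 1 + (m + 1) * σ1 by rw [Nat.succ_mul]; omega)
      omega
  have hlow : ∀ i k, (k - 1) / σ1 ≤ l i k := by
    intro i k
    rcases Nat.eq_zero_or_pos k with rfl | hk
    · simp
    · refine (hm i ((k - 1) / σ1)).trans (hmon i ?_)
      have := Nat.div_mul_le_self (k - 1) σ1
      omega
  have hIco : ∀ (c a b : ℕ), c ≤ a → b ≤ a + σ2 → ∑ t ∈ Finset.Ico a b, ρ t ≤ σ2 * ρ c := by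
    intro c a b hca hb
    calc ∑ t ∈ Finset.Ico a b, ρ t ≤ ∑ t ∈ Finset.Ico a b, ρ c :=
          Finset.sum_le_sum fun t ht => hρa (hca.trans (Finset.mem_Ico.1 ht).1)
      _ = ((b - a : ℕ) : ℝ) * ρ c := by simp
      _ ≤ _ := by
          have := hρpos c
          gcongr
          omega
  have hαS : ∀ i k, α i k
      = ∑ t ∈ Finset.range (l i (k + 1)), ρ t - ∑ t ∈ Finset.range (l i k), ρ t := by
    intro i k
    rw [hα, Finset.sum_Ico_eq_sub _ (hstep i k).1]
  have hα0 : ∀ i k, 0 ≤ α i k := by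
    intro i k; rw [hα]; exact Finset.sum_nonneg fun t _ => (hρpos t).le
  refine ⟨hα0, ?_, ?_, ?_, ?_⟩
  · intro i k h; rw [hα, hlstay i k h]; simp
  · intro i k
    rw [hα]
    exact hIco _ _ _ (by simpa using hlow i k) (hstep i k).2
  · refine ⟨fun i k => ∑ t ∈ Finset.range (l i k), ρ t
      - ∑ t ∈ Finset.range (l ⟨0, hn⟩ k), ρ t, ?_, ?_⟩
    · intro i k
      rw [hαS, hαS]; ring
    · intro i k
      have hc : ∀ i, (k - 2) / σ1 ≤ l i k := fun i =>
        (Nat.div_le_div_right (by omega)).trans (hlow i k)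
      beta_reduce
      rcases le_total (l i k) (l ⟨0, hn⟩ k) with h | h
      · rw [abs_sub_comm, ← Finset.sum_Ico_eq_sub _ h,
          abs_of_nonneg (Finset.sum_nonneg fun t _ => (hρpos t).le)]
        exact hIco _ _ _ (hc _) (hlgap _ _ _)
      · rw [← Finset.sum_Ico_eq_sub _ h,
          abs_of_nonneg (Finset.sum_nonneg fun t _ => (hρpos t).le)]
        exact hIco _ _ _ (hc _) (hlgap _ _ _)
  · intro hs
    apply hρdiv
    apply summable_of_sum_range_le (c := ∑' k, α ⟨0, hn⟩ k) (fun t => (hρpos t).le)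
    intro m
    have h1 : ∀ K, ∑ k ∈ Finset.range K, α ⟨0, hn⟩ k = ∑ t ∈ Finset.range (l ⟨0, hn⟩ K), ρ t := by
      intro K
      induction K with
      | zero => simp [hl0]
      | succ K ih => rw [Finset.sum_range_succ, ih, hαS]; ring
    calc ∑ t ∈ Finset.range m, ρ t ≤ ∑ t ∈ Finset.range (l ⟨0, hn⟩ (1 + m * σ1)), ρ t := by
          apply Finset.sum_le_sum_of_subset_of_nonneg
          · exact Finset.range_mono (hm _ m)
          · intros; exact (hρpos _).le
      _ = ∑ k ∈ Finset.range (1 + m * σ1), α ⟨0, hn⟩ k := (h1 _).symm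
      _ ≤ _ := hs.sum_le_tsum _ (fun t _ => hα0 _ t)

/-- The Lyapunov argument. -/
lemma lyapunov_converge (n : ℕ) (hn : 0 < n) (X : Fin n → Set E)
    (hXcomp : ∀ i, IsCompact (X i))
    (F : Fin n → E → E → E) (L R MF : ℝ) (hL : 0 < L) (hR : 0 ≤ R) (hMF : 0 ≤ MF)
    (hFlip : ∀ i a a' z z', ‖F i a z - F i a' z'‖ ≤ L * (‖a - a'‖ + ‖z - z'‖))
    (hmono : ∀ a a' : Fin n → E, (∀ i, a i ∈ X i) → (∀ i, a' i ∈ X i) → a ≠ a' →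
      0 < ∑ i, ⟪F i (a i) ((n : ℝ)⁻¹ • ∑ j, a j) -
                F i (a' i) ((n : ℝ)⁻¹ • ∑ j, a' j), a i - a' i⟫)
    (xs : Fin n → E) (hxs : ∀ i, xs i ∈ X i)
    (hvi : ∀ i, ∀ u ∈ X i, 0 ≤ ⟪F i (xs i) ((n : ℝ)⁻¹ • ∑ j, xs j), u - xs i⟫)
    (hXR : ∀ i, ∀ u ∈ X i, ‖u‖ ≤ R)
    (hFR : ∀ i a b, ‖a‖ ≤ R → ‖b‖ ≤ R → ‖F i a b‖ ≤ MF)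
    (x z : ℕ → Fin n → E) (hx : ∀ k i, x k i ∈ X i)
    (α D : Fin n → ℕ → ℝ) (α0 : ℕ → ℝ) (hα0 : ∀ k, 0 ≤ α0 k) (hα : ∀ i k, 0 ≤ α i k)
    (hD : ∀ i k, α i k = α0 k + D i (k + 1) - D i k)
    (q S : ℕ → ℝ) (hq0 : ∀ k, 0 < q k) (hqa : Antitone q) (hqs : Summable fun k => q k ^ 2)
    (hS0 : ∀ k, 0 ≤ S k) (hqS : Summable fun k => q k * S k)
    (C : ℝ) (hC : 0 ≤ C) (hαq : ∀ i k, α i k ≤ C * q k) (hDq : ∀ i k, |D i k| ≤ C * q k)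
    (hstep : ∀ i k, ‖x (k + 1) i - x k i‖ ≤ C * q (k + 1))
    (hzS : ∀ k i, ‖z (k + 1) i - (n : ℝ)⁻¹ • ∑ j, x k j‖ ≤ C * S k)
    (hdec : ∀ i k, ‖x (k + 1) i - xs i‖ ^ 2 ≤ ‖x k i - xs i‖ ^ 2
      - 2 * (α i k * ⟪F i (x k i) (z (k + 1) i), x k i - xs i⟫) + (α i k * C) ^ 2)
    (hdiv : ¬ Summable α0) :
    ∀ i, Tendsto (fun k => x k i) atTop (𝓝 (xs i)) := by
  have hnpos : (0 : ℝ) < n := by exact_mod_cast hn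
  have havg : ∀ (c : ℝ) (g : Fin n → E), (∀ i, ‖g i‖ ≤ c) → ‖(n : ℝ)⁻¹ • ∑ j, g j‖ ≤ c := by
    intro c g hg
    rw [norm_smul, norm_inv, Real.norm_natCast, inv_mul_le_iff₀ hnpos]
    refine (norm_sum_le _ _).trans ((Finset.sum_le_sum fun j _ => hg j).trans ?_)
    simp
  set xb : ℕ → E := fun k => (n : ℝ)⁻¹ • ∑ j, x k j with hxb
  have hxbR : ∀ k, ‖xb k‖ ≤ R := fun k => havg R _ fun i => hXR i _ (hx k i)
  have hxbstep : ∀ k, ‖xb (k + 1) - xb k‖ ≤ C * q (k + 1) := by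
    intro k
    simp only [hxb]
    rw [← smul_sub, ← Finset.sum_sub_distrib]
    exact havg _ _ fun i => hstep i k
  have hdist : ∀ k i, ‖x k i - xs i‖ ≤ 2 * R := by
    intro k i
    have := norm_sub_le (x k i) (xs i)
    have := hXR i _ (hx k i); have := hXR i _ (hxs i)
    linarith
  set h : Fin n → ℕ → ℝ := fun i k => ⟪F i (x k i) (xb k), x k i - xs i⟫ with hh
  have hhb : ∀ i k, |h i k| ≤ MF * (2 * R) := by
    intro i k
    refine (abs_real_inner_le_norm _ _).trans ?_
    exact mul_le_mul (hFR i _ _ (hXR i _ (hx k i)) (hxbR k)) (hdist k i) (norm_nonneg _) hMF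
  set Ch : ℝ := (2 * L * (2 * R) + MF) * C with hCh
  have hCh0 : 0 ≤ Ch := by positivity
  have hhd : ∀ i k, |h i (k + 1) - h i k| ≤ Ch * q (k + 1) := by
    intro i k
    have e : h i (k + 1) - h i k = ⟪F i (x (k + 1) i) (xb (k + 1)) - F i (x k i) (xb k),
        x (k + 1) i - xs i⟫ + ⟪F i (x k i) (xb k), x (k + 1) i - x k i⟫ := by
      simp only [hh, inner_sub_left, inner_sub_right]; ring
    rw [e]
    refine (abs_add_le _ _).trans ?_
    have hqk := hq0 (k + 1)
    have h1 : |⟪F i (x (k + 1) i) (xb (k + 1)) - F i (x k i) (xb k), x (k + 1) i - xs i⟫|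
        ≤ (L * (C * q (k + 1) + C * q (k + 1))) * (2 * R) := by
      refine (abs_real_inner_le_norm _ _).trans ?_
      refine mul_le_mul ?_ (hdist _ i) (norm_nonneg _) (by positivity)
      refine (hFlip _ _ _ _ _).trans ?_
      gcongr
      · exact hstep i k
      · exact hxbstep k
    have h2 : |⟪F i (x k i) (xb k), x (k + 1) i - x k i⟫| ≤ MF * (C * q (k + 1)) := by
      refine (abs_real_inner_le_norm _ _).trans ?_
      exact mul_le_mul (hFR i _ _ (hXR i _ (hx k i)) (hxbR k)) (hstep i k) (norm_nonneg _) hMF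
    rw [hCh]
    linarith
  set e : ℕ → ℝ := fun k => 2 * C * (L * C * (2 * R)) * (q k * S k) + C ^ 4 * q k ^ 2
    + 2 * C * Ch * q (k + 1) ^ 2 with he
  have he0 : ∀ k, 0 ≤ e k := by
    intro k
    have := hq0 k; have := hS0 k; have := hq0 (k + 1)
    simp only [he]; positivity
  have hes : Summable e := by
    refine ((hqS.mul_left _).add (hqs.mul_left _)).add (Summable.mul_left _ ?_)
    exact (summable_nat_add_iff 1).2 hqs
  have hone : ∀ i k, ‖x (k + 1) i - xs i‖ ^ 2 + 2 * (D i (k + 1) * h i (k + 1))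
      ≤ ‖x k i - xs i‖ ^ 2 + 2 * (D i k * h i k) - 2 * (α0 k * h i k) + e k := by
    intro i k
    have h1 := hdec i k
    have hqk := hq0 k
    have hSk := hS0 k
    have h2 : α i k * (h i k - ⟪F i (x k i) (z (k + 1) i), x k i - xs i⟫)
        ≤ C * q k * (L * (C * S k) * (2 * R)) := by
      have h6 : h i k - ⟪F i (x k i) (z (k + 1) i), x k i - xs i⟫
          ≤ L * (C * S k) * (2 * R) := by
        simp only [hh]
        rw [← inner_sub_left]
        refine (real_inner_le_norm _ _).trans ?_
        refine mul_le_mul ?_ (hdist k i) (norm_nonneg _) (by positivity)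
        refine (hFlip _ _ _ _ _).trans ?_
        rw [sub_self, norm_zero, zero_add, norm_sub_rev]
        gcongr
        exact hzS k i
      calc _ ≤ α i k * (L * (C * S k) * (2 * R)) := mul_le_mul_of_nonneg_left h6 (hα i k)
        _ ≤ _ := mul_le_mul_of_nonneg_right (hαq i k) (by positivity)
    have h3 : (α i k * C) ^ 2 ≤ C ^ 4 * q k ^ 2 := by
      calc (α i k * C) ^ 2 ≤ (C * q k * C) ^ 2 := by
            have := hα i k
            gcongr; exact hαq i k
        _ = _ := by ring
    have h4 : D i (k + 1) * (h i (k + 1) - h i k) ≤ C * Ch * q (k + 1) ^ 2 := by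
      calc D i (k + 1) * (h i (k + 1) - h i k)
          ≤ |D i (k + 1)| * |h i (k + 1) - h i k| := by rw [← abs_mul]; exact le_abs_self _
        _ ≤ (C * q (k + 1)) * (Ch * q (k + 1)) :=
            mul_le_mul (hDq i _) (hhd i k) (abs_nonneg _)
              (by have := hq0 (k + 1); positivity)
        _ = _ := by ring
    have h5 : α i k * h i k = α0 k * h i k + D i (k + 1) * h i k - D i k * h i k := by
      rw [hD i k]; ring
    simp only [he]
    nlinarith
  set V : ℕ → ℝ := fun k => ∑ i, ‖x k i - xs i‖ ^ 2 with hV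
  set Dh : ℕ → ℝ := fun k => ∑ i, 2 * (D i k * h i k) with hDh
  have hVnn : ∀ k, 0 ≤ V k := fun k => Finset.sum_nonneg fun i _ => by positivity
  have hDhb : ∀ k, |Dh k| ≤ n * (2 * (C * (MF * (2 * R)))) * q k := by
    intro k
    refine (Finset.abs_sum_le_sum_abs _ _).trans ?_
    have : ∀ i ∈ Finset.univ, |2 * (D i k * h i k)| ≤ 2 * (C * (MF * (2 * R))) * q k := by
      intro i _
      rw [abs_mul, abs_mul, abs_of_pos (two_pos : (0 : ℝ) < 2)]
      have := mul_le_mul (hDq i k) (hhb i k) (abs_nonneg _)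
        (by have := hq0 k; positivity)
      linarith
    refine (Finset.sum_le_sum this).trans ?_
    simp only [Finset.sum_const, Finset.card_univ, Fintype.card_fin, nsmul_eq_mul]
    apply le_of_eq; ring
  have hqt : Tendsto q atTop (𝓝 0) := by
    have h1 := hqs.tendsto_atTop_zero.sqrt
    simpa [Real.sqrt_sq (hq0 _).le] using h1
  have hDht : Tendsto Dh atTop (𝓝 0) := by
    refine squeeze_zero_norm hDhb ?_
    simpa using hqt.const_mul (n * (2 * (C * (MF * (2 * R)))))
  set H : (Fin n → E) → ℝ := fun a => ∑ i, ⟪F i (a i) ((n : ℝ)⁻¹ • ∑ j, a j), a i - xs i⟫ with hH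
  have hHpos : ∀ a : Fin n → E, (∀ i, a i ∈ X i) → a ≠ xs → 0 < H a := by
    intro a ha hne
    have h1 := hmono a xs ha hxs hne
    have h2 : 0 ≤ ∑ i, ⟪F i (xs i) ((n : ℝ)⁻¹ • ∑ j, xs j), a i - xs i⟫ :=
      Finset.sum_nonneg fun i _ => hvi i _ (ha i)
    simp only [inner_sub_left, Finset.sum_sub_distrib] at h1
    simp only [hH]
    linarith
  have hHnn : ∀ k, 0 ≤ H (x k) := by
    intro k
    by_cases hc : x k = xs
    · simp [hH, hc]
    · exact (hHpos _ (hx k) hc).le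
  obtain ⟨⟨c, hc⟩, hsum⟩ := quasi_fejer (fun k => V k + Dh k) (fun k => 2 * (α0 k * H (x k)))
    (fun k => n * e k)
    (by
      refine ⟨-(n * (2 * (C * (MF * (2 * R)))) * q 0), fun k => ?_⟩
      have h1 := (abs_le.1 (hDhb k)).1
      have h2 : n * (2 * (C * (MF * (2 * R)))) * q k ≤ n * (2 * (C * (MF * (2 * R)))) * q 0 := by
        have := hqa (Nat.zero_le k)
        gcongr
      have := hVnn k
      linarith)
    (fun k => by have := hα0 k; have := hHnn k; positivity)
    (hes.mul_left _) (fun k => by have := he0 k; positivity)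
    (by
      intro k
      have h1 := Finset.sum_le_sum (s := Finset.univ) fun i _ => hone i k
      simp only [Finset.sum_add_distrib, Finset.sum_sub_distrib, ← Finset.mul_sum,
        Finset.sum_const, Finset.card_univ, Fintype.card_fin, nsmul_eq_mul] at h1
      simp only [hV, hDh, hH, ← Finset.mul_sum]
      exact h1)
  have hVc : Tendsto V atTop (𝓝 c) := by
    have := hc.sub hDht
    simpa using this
  have hc0 : 0 ≤ c := ge_of_tendsto' hVc hVnn
  have hcz : c = 0 := by
    by_contra hne
    have hcpos : 0 < c := lt_of_le_of_ne hc0 (Ne.symm hne)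
    have hev : ∀ᶠ k in atTop, c / 2 ≤ V k :=
      (hVc.eventually (lt_mem_nhds (by linarith : c / 2 < c))).mono fun k hk => hk.le
    set K : Set (Fin n → E) := Set.univ.pi X ∩ {a | c / 2 ≤ ∑ i, ‖a i - xs i‖ ^ 2} with hK
    have hKc : IsCompact K := by
      refine (isCompact_univ_pi hXcomp).inter_right ?_
      exact isClosed_le continuous_const (by fun_prop)
    have hFc : ∀ i, Continuous (fun r : E × E => F i r.1 r.2) := by
      intro i
      have : LipschitzWith (Real.toNNReal (2 * L)) (fun r : E × E => F i r.1 r.2) := by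
        apply LipschitzWith.of_dist_le_mul
        intro a b
        rw [dist_eq_norm, dist_eq_norm, Real.coe_toNNReal _ (by positivity)]
        refine (hFlip _ _ _ _ _).trans ?_
        have h1 : ‖a.1 - b.1‖ ≤ ‖a - b‖ := norm_fst_le (a - b)
        have h2 : ‖a.2 - b.2‖ ≤ ‖a - b‖ := norm_snd_le (a - b)
        nlinarith
      exact this.continuous
    have hHc : Continuous H := by
      refine continuous_finsetSum _ fun i _ => ?_
      refine Continuous.inner ?_ (by fun_prop)
      exact (hFc i).comp (by fun_prop : Continuous fun a : Fin n → E =>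
        ((a i, (n : ℝ)⁻¹ • ∑ j, a j) : E × E))
    have hmem : ∀ k, c / 2 ≤ V k → x k ∈ K := fun k hk => ⟨fun i _ => hx k i, hk⟩
    have hKn : K.Nonempty := by
      obtain ⟨k, hk⟩ := hev.exists
      exact ⟨_, hmem k hk⟩
    obtain ⟨a, haK, hmin⟩ := hKc.exists_isMinOn hKn hHc.continuousOn
    have hδ : 0 < H a := by
      refine hHpos a (fun i => haK.1 i trivial) ?_
      rintro rfl
      have : c / 2 ≤ _ := haK.2
      simp at this
      linarith
    apply hdiv
    refine Summable.of_norm_bounded_eventually_nat (g := fun k => (2 * H a)⁻¹ *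
      (2 * (α0 k * H (x k)))) (hsum.mul_left _) ?_
    filter_upwards [hev] with k hk
    have h1 : H a ≤ H (x k) := hmin (hmem k hk)
    rw [Real.norm_of_nonneg (hα0 k), le_inv_mul_iff₀ (by positivity)]
    have := hα0 k
    nlinarith
  subst hcz
  intro i
  rw [tendsto_iff_norm_sub_tendsto_zero]
  have h1 : Tendsto (fun k => ‖x k i - xs i‖ ^ 2) atTop (𝓝 0) := by
    refine squeeze_zero (fun k => by positivity) (fun k => ?_) hVc
    exact Finset.single_le_sum (f := fun i => ‖x k i - xs i‖ ^ 2) (fun i _ => by positivity)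
      (Finset.mem_univ i)
  have h2 := h1.sqrt
  simpa [Real.sqrt_sq (norm_nonneg _)] using h2

end Dynamics

/-- Proposition 3: under Assumptions 1 and 2, with globally continuously differentiable
costs, globally L-Lipschitz game mappings, a non-summable stepsize generating sequence,
and the augmented push-sum dynamics with the ergodicity hypothesis, every player's
action `x_i(k)` converges to the `i`-th component of the unique Nash equilibrium. -/
theorem asynchronous_algorithm_converges_to_nash_equilibrium
    (n N p : ℕ) (hn : 0 < n) (hnN : n ≤ N)
    (X : Fin n → Set (EuclideanSpace ℝ (Fin p)))
    -- nonempty convex compact action sets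
    (hXne : ∀ i, (X i).Nonempty)
    (hXconv : ∀ i, Convex ℝ (X i))
    (hXcomp : ∀ i, IsCompact (X i))
    -- the game mappings, L-Lipschitz on ℝ^p × ℝ^p
    (F : Fin n → EuclideanSpace ℝ (Fin p) → EuclideanSpace ℝ (Fin p) →
      EuclideanSpace ℝ (Fin p))
    (L : ℝ) (hLpos : 0 < L)
    (hFlip : ∀ i xi xi' z z',
      ‖F i xi z - F i xi' z'‖ ≤ L * Real.sqrt (‖xi - xi'‖ ^ 2 + ‖z - z'‖ ^ 2))
    -- nonnegative column-stochastic matrices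
    (A : ℕ → Matrix (Fin N) (Fin N) ℝ)
    (hAnn : ∀ k i j, 0 ≤ A k i j)
    (hAcol : ∀ k j, ∑ i, A k i j = 1)
    -- states
    (v w : ℕ → Fin N → EuclideanSpace ℝ (Fin p))
    (y : ℕ → Fin N → ℝ)
    (x z : ℕ → Fin n → EuclideanSpace ℝ (Fin p))
    -- initialization
    (hx0 : ∀ i, x 0 i ∈ X i)
    (hv0p : ∀ i : Fin n, v 0 (Fin.castLE hnN i) = x 0 i)
    (hy0p : ∀ i : Fin n, y 0 (Fin.castLE hnN i) = 1)
    (hv0v : ∀ j : Fin N, n ≤ (j : ℕ) → v 0 j = 0)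
    (hy0v : ∀ j : Fin N, n ≤ (j : ℕ) → y 0 j = 0)
    -- activation sets
    (Aset : ℕ → Finset (Fin n))
    (hAsetne : ∀ k, (Aset k).Nonempty)
    (σ1 : ℕ) (hσ1 : 1 ≤ σ1)
    (hcover : ∀ k, ∀ i : Fin n, ∃ u, k + 1 ≤ u ∧ u ≤ k + σ1 ∧ i ∈ Aset u)
    -- counters
    (l : Fin n → ℕ → ℕ) (σ2 : ℕ) (hσ2 : 1 ≤ σ2)
    (hl0 : ∀ i, l i 0 = 0)
    (hlact : ∀ i k, i ∈ Aset k → l i k + 1 ≤ l i (k + 1) ∧ l i (k + 1) ≤ l i k + σ2)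
    (hlstay : ∀ i k, i ∉ Aset k → l i (k + 1) = l i k)
    -- stepsize generating sequence
    (ρ : ℕ → ℝ)
    (hρpos : ∀ t, 0 < ρ t)
    (hρmono : ∀ t, ρ (t + 1) ≤ ρ t)
    (hρsq : Summable fun t => ρ t ^ 2)
    (α : Fin n → ℕ → ℝ)
    (hα : ∀ i k, α i k = ∑ t ∈ Finset.Ico (l i k) (l i (k + 1)), ρ t)
    -- push-sum dynamics
    (hw : ∀ k, ∀ j : Fin N, w (k + 1) j = ∑ m, A k j m • v k m)
    (hy : ∀ k, ∀ j : Fin N, y (k + 1) j = ∑ m, A k j m * y k m)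
    (hz : ∀ k, ∀ i : Fin n,
      z (k + 1) i = (y (k + 1) (Fin.castLE hnN i))⁻¹ • w (k + 1) (Fin.castLE hnN i))
    -- the projected pseudo-gradient update for active players
    (hxup : ∀ k, ∀ i : Fin n, i ∈ Aset k →
      x (k + 1) i ∈ X i ∧
      ∀ u ∈ X i,
        ‖x k i - α i k • F i (x k i) (z (k + 1) i) - x (k + 1) i‖ ≤
        ‖x k i - α i k • F i (x k i) (z (k + 1) i) - u‖)
    (hxstay : ∀ k, ∀ i : Fin n, i ∉ Aset k → x (k + 1) i = x k i)
    (hv : ∀ k, ∀ j : Fin N, v (k + 1) j =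
      w (k + 1) j + (if h : (j : ℕ) < n then x (k + 1) ⟨j, h⟩ - x k ⟨j, h⟩ else 0))
    -- ergodicity hypothesis
    (B' lam η : ℝ) (hB' : 0 < B') (hlam : lam ∈ Set.Ioo (0 : ℝ) 1)
    (hη : η ∈ Set.Ioc (0 : ℝ) 1)
    (φvec : ℕ → Fin N → ℝ)
    (hφnn : ∀ k i, 0 ≤ φvec k i)
    (hφsum : ∀ k, ∑ i, φvec k i = 1)
    (herg : ∀ k t, t ≤ k → ∀ i j : Fin N, |backProd A k t i j - φvec k i| ≤ B' * lam ^ t)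
    (hylb : ∀ i : Fin n, ∀ k, 1 ≤ k → η ≤ y k (Fin.castLE hnN i))
    -- game data: costs and Assumption 1
    (f : Fin n → EuclideanSpace ℝ (Fin p) → EuclideanSpace ℝ (Fin p) → ℝ)
    (hfC1 : ∀ i, ContDiff ℝ 1 (fun q : EuclideanSpace ℝ (Fin p) × EuclideanSpace ℝ (Fin p) =>
      f i q.1 q.2))
    (hfconv : ∀ i, ∀ xbarmi ∈ (n : ℝ)⁻¹ • ∑ j ∈ Finset.univ.erase i, X j,
      ConvexOn ℝ (X i) (fun xi => f i xi ((n : ℝ)⁻¹ • xi + xbarmi)))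
    -- the game mappings Fᵢ(xᵢ, z) = ∇_{xᵢ} fᵢ(xᵢ, z) + (1/n) ∇_z fᵢ(xᵢ, z)
    (hF : ∀ i xi zz, F i xi zz =
      gradient (fun u => f i u zz) xi + (n : ℝ)⁻¹ • gradient (fun u => f i xi u) zz)
    -- Assumption 2: strict monotonicity of the pseudo-gradient on X
    (hmono : ∀ a a' : Fin n → EuclideanSpace ℝ (Fin p),
      (∀ i, a i ∈ X i) → (∀ i, a' i ∈ X i) → a ≠ a' →
      0 < ∑ i, ⟪F i (a i) ((n : ℝ)⁻¹ • ∑ j, a j) -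
                F i (a' i) ((n : ℝ)⁻¹ • ∑ j, a' j), a i - a' i⟫)
    -- bounded counter mismatch between players
    (hlgap : ∀ i j : Fin n, ∀ k, l i k ≤ l j k + σ2)
    -- the stepsize generating sequence is non-summable: ∑ₜ ρ(t) = ∞
    (hρdiv : ¬ Summable ρ) :
    -- conclusion: x_i(k) → x*_i where x* is the unique Nash equilibrium
    ∃ xstar : Fin n → EuclideanSpace ℝ (Fin p),
      ((∀ i, xstar i ∈ X i) ∧
       ∀ i, ∀ xi ∈ X i,
        f i (xstar i) ((n : ℝ)⁻¹ • ∑ j, xstar j) ≤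
        f i xi ((n : ℝ)⁻¹ • xi + (n : ℝ)⁻¹ • ∑ j ∈ Finset.univ.erase i, xstar j)) ∧
      (∀ b : Fin n → EuclideanSpace ℝ (Fin p),
        ((∀ i, b i ∈ X i) ∧
         ∀ i, ∀ xi ∈ X i,
          f i (b i) ((n : ℝ)⁻¹ • ∑ j, b j) ≤
          f i xi ((n : ℝ)⁻¹ • xi + (n : ℝ)⁻¹ • ∑ j ∈ Finset.univ.erase i, b j)) →
        b = xstar) ∧
      (∀ i : Fin n, Tendsto (fun k => x k i) atTop (nhds (xstar i))) := by
  have hlip : ∀ i a a' b b', ‖F i a b - F i a' b'‖ ≤ L * (‖a - a'‖ + ‖b - b'‖) := by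
    intro i a a' b b'
    refine (hFlip i a a' b b').trans ?_
    gcongr
    rw [Real.sqrt_le_left (by positivity)]
    nlinarith [norm_nonneg (a - a'), norm_nonneg (b - b')]
  have hnpos : (0 : ℝ) < n := by exact_mod_cast hn
  obtain ⟨xs, hxs, hvi⟩ := game_vi n X hXne hXconv hXcomp F L hLpos hlip hmono
  have hsplit : ∀ (b : Fin n → EuclideanSpace ℝ (Fin p)) (i : Fin n), (n : ℝ)⁻¹ • ∑ j, b j
      = (n : ℝ)⁻¹ • b i + (n : ℝ)⁻¹ • ∑ j ∈ Finset.univ.erase i, b j := by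
    intro b i
    rw [← smul_add, Finset.add_sum_erase _ _ (Finset.mem_univ i)]
  -- Nash equilibria are exactly the solutions of the variational inequality
  have hNE : ∀ b : Fin n → EuclideanSpace ℝ (Fin p), (∀ i, b i ∈ X i) →
      ((∀ i, ∀ xi ∈ X i, f i (b i) ((n : ℝ)⁻¹ • ∑ j, b j) ≤
          f i xi ((n : ℝ)⁻¹ • xi + (n : ℝ)⁻¹ • ∑ j ∈ Finset.univ.erase i, b j)) ↔
       (∀ i, ∀ u ∈ X i, 0 ≤ ⟪F i (b i) ((n : ℝ)⁻¹ • ∑ j, b j), u - b i⟫)) := by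
    intro b hb
    refine forall_congr' fun i => ?_
    have hmem : (n : ℝ)⁻¹ • ∑ j ∈ Finset.univ.erase i, b j
        ∈ (n : ℝ)⁻¹ • ∑ j ∈ Finset.univ.erase i, X j :=
      Set.smul_mem_smul_set (Set.finset_sum_mem_finset_sum _ _ _ fun j _ => hb j)
    have := player_opt (f i) (hfC1 i) (n : ℝ)⁻¹ _ (X i) (hXconv i) (hfconv i _ hmem) (b i) (hb i)
    rw [hF, hsplit b i]
    exact this
  refine ⟨xs, ⟨hxs, (hNE xs hxs).2 hvi⟩, ?_, ?_⟩
  · rintro b ⟨hb, hbN⟩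
    by_contra hne
    have hbv := (hNE b hb).1 hbN
    have h1 := hmono b xs hb hxs hne
    have h2 : ∑ i, ⟪F i (b i) ((n : ℝ)⁻¹ • ∑ j, b j) -
        F i (xs i) ((n : ℝ)⁻¹ • ∑ j, xs j), b i - xs i⟫ ≤ 0 := by
      refine Finset.sum_nonpos fun i _ => ?_
      have h3 := hbv i (xs i) (hxs i)
      have h4 := hvi i (b i) (hb i)
      rw [← neg_sub (b i) (xs i), inner_neg_right] at h3
      rw [inner_sub_left]
      linarith
    linarith
  -- invariance and bounds
  have hx : ∀ k i, x k i ∈ X i := by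
    intro k
    induction k with
    | zero => exact hx0
    | succ k ih =>
      intro i
      by_cases h : i ∈ Aset k
      · exact (hxup k i h).1
      · rw [hxstay k i h]; exact ih i
  have hr : ∀ i, ∃ r : ℝ, ∀ u ∈ X i, ‖u‖ ≤ r := fun i => (hXcomp i).isBounded.exists_norm_le
  choose r hr using hr
  obtain ⟨R, hR, hXR⟩ : ∃ R : ℝ, 0 ≤ R ∧ ∀ i, ∀ u ∈ X i, ‖u‖ ≤ R := by
    refine ⟨∑ i, |r i|, Finset.sum_nonneg fun i _ => abs_nonneg _, fun i u hu => ?_⟩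
    refine (hr i u hu).trans ((le_abs_self _).trans ?_)
    exact Finset.single_le_sum (f := fun i => |r i|) (fun i _ => abs_nonneg _) (Finset.mem_univ i)
  obtain ⟨F0, hF0, hFb⟩ : ∃ F0 : ℝ, 0 ≤ F0 ∧ ∀ i a b, ‖F i a b‖ ≤ F0 + L * (‖a‖ + ‖b‖) := by
    refine ⟨∑ i, ‖F i 0 0‖, Finset.sum_nonneg fun i _ => norm_nonneg _, fun i a b => ?_⟩
    have h1 := hlip i a 0 b 0
    rw [sub_zero, sub_zero] at h1
    have h2 : ‖F i 0 0‖ ≤ ∑ i, ‖F i 0 0‖ :=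
      Finset.single_le_sum (f := fun i => ‖F i 0 0‖) (fun i _ => norm_nonneg _) (Finset.mem_univ i)
    have h3 := norm_le_norm_add_norm_sub' (F i a b) (F i 0 0)
    linarith
  have hbar : ∀ k, ‖(n : ℝ)⁻¹ • ∑ j, x k j‖ ≤ R := by
    intro k
    rw [norm_smul, norm_inv, Real.norm_natCast, inv_mul_le_iff₀ hnpos]
    refine (norm_sum_le _ _).trans ((Finset.sum_le_sum fun j _ => hXR j _ (hx k j)).trans ?_)
    simp
  have hsum0 : ∑ i, ‖x 0 i‖ ≤ n * R := by
    refine (Finset.sum_le_sum fun j _ => hXR j _ (hx 0 j)).trans ?_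
    simp
  -- crude bound on z
  obtain ⟨C1, hC1, hz1⟩ := z_err n N hn hnN A v w y x z hv0p hy0p hv0v hy0v hw hy hz hv B' lam η
    hB' hlam hη φvec herg hylb (fun _ => 1) (fun _ => one_pos) (n * (2 * R)) R (by positivity) hR
    (by nlinarith) (by
      intro t
      have : ∀ i ∈ Finset.univ, ‖x (t + 1) i - x t i‖ ≤ 2 * R := by
        intro i _
        have := norm_sub_le (x (t + 1) i) (x t i)
        have := hXR i _ (hx (t + 1) i); have := hXR i _ (hx t i)
        linarith
      refine (Finset.sum_le_sum this).trans ?_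
      simp) hbar
  have hgeo := summable_geometric_of_lt_one hlam.1.le hlam.2
  have hT : ∀ k, ∑ t ∈ Finset.range (k + 1), lam ^ (k - t) * (1 : ℝ) ≤ ∑' t, lam ^ t := by
    intro k
    have e : ∑ t ∈ Finset.range (k + 1), lam ^ (k - t) * (1 : ℝ)
        = ∑ t ∈ Finset.range (k + 1), lam ^ t := by
      rw [← Finset.sum_range_reflect (fun t => lam ^ t) (k + 1)]
      simp
    rw [e]
    exact hgeo.sum_le_tsum _ fun t _ => by have := hlam.1; positivity
  set T : ℝ := ∑' t, lam ^ t with hTdef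
  have hT0 : 0 ≤ T := tsum_nonneg fun t => by have := hlam.1; positivity
  have hzb : ∀ k i, ‖z (k + 1) i‖ ≤ R + C1 * T := by
    intro k i
    have h1 := hz1 k i
    have h2 : C1 * ∑ t ∈ Finset.range (k + 1), lam ^ (k - t) * (1 : ℝ) ≤ C1 * T := by
      gcongr; exact hT k
    have h3 := norm_le_norm_add_norm_sub' (z (k + 1) i) ((n : ℝ)⁻¹ • ∑ j, x k j)
    have := hbar k
    linarith
  set MG : ℝ := F0 + L * (R + (R + C1 * T)) with hMG
  have hMG0 : 0 ≤ MG := by positivity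
  have hFz : ∀ k i, ‖F i (x k i) (z (k + 1) i)‖ ≤ MG := by
    intro k i
    refine (hFb i _ _).trans ?_
    rw [hMG]
    gcongr
    · exact hXR i _ (hx k i)
    · exact hzb k i
  -- stepsizes
  have hρa : Antitone ρ := antitone_nat_of_succ_le hρmono
  obtain ⟨hα0, hαz, hαle, ⟨D, hD, hDle⟩, hdiv⟩ := counters n hn Aset σ1 hσ1 hcover l σ2 hl0 hlact
    hlstay ρ hρpos hρa α hα hlgap hρdiv
  set q : ℕ → ℝ := fun t => ρ ((t - 2) / σ1) with hq
  have hq0 : ∀ t, 0 < q t := fun t => hρpos _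
  have hqa : Antitone q := fun s t hst => hρa (Nat.div_le_div_right (by omega))
  have hqs : Summable fun t => q t ^ 2 :=
    summable_div_comp (fun t => ρ t ^ 2) hρsq (fun t => sq_nonneg _) σ1 2 hσ1
  have hαq1 : ∀ i k, α i k ≤ σ2 * q (k + 1) := hαle
  -- projection step
  have hproj : ∀ i k, ‖x (k + 1) i - x k i‖ ≤ α i k * MG ∧
      ‖x (k + 1) i - xs i‖ ^ 2 ≤ ‖x k i - xs i‖ ^ 2
      - 2 * (α i k * ⟪F i (x k i) (z (k + 1) i), x k i - xs i⟫) + (α i k * MG) ^ 2 := by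
    intro i k
    by_cases h : i ∈ Aset k
    · obtain ⟨h1, h2⟩ := hxup k i h
      obtain ⟨h3, h4⟩ := proj_step (hXconv i) (hx k i) h1 h2
      have h5 : ‖α i k • F i (x k i) (z (k + 1) i)‖ ≤ α i k * MG := by
        rw [norm_smul, Real.norm_of_nonneg (hα0 i k)]
        exact mul_le_mul_of_nonneg_left (hFz k i) (hα0 i k)
      refine ⟨h3.trans h5, ?_⟩
      have h6 := h4 (xs i) (hxs i)
      rw [real_inner_smul_left] at h6
      have h7 := pow_le_pow_left₀ (norm_nonneg _) h5 2
      linarith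
    · rw [hαz i k h, hxstay k i h]; simp
  have hstep : ∀ i k, ‖x (k + 1) i - x k i‖ ≤ σ2 * MG * q (k + 1) := by
    intro i k
    refine (hproj i k).1.trans ?_
    calc α i k * MG ≤ (σ2 * q (k + 1)) * MG := mul_le_mul_of_nonneg_right (hαq1 i k) hMG0
      _ = _ := by ring
  have hq00 := hq0 0
  -- refined bound on z
  obtain ⟨C2, hC2, hz2⟩ := z_err n N hn hnN A v w y x z hv0p hy0p hv0v hy0v hw hy hz hv B' lam η
    hB' hlam hη φvec herg hylb q hq0 (n * R / q 0 + n * (σ2 * MG)) R (by positivity) hR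
    (by
      rw [add_mul, div_mul_cancel₀ _ hq00.ne']
      have : 0 ≤ n * (σ2 * MG) * q 0 := by positivity
      linarith) (by
      intro t
      refine (Finset.sum_le_sum fun i _ => hstep i t).trans ?_
      simp only [Finset.sum_const, Finset.card_univ, Fintype.card_fin, nsmul_eq_mul]
      have := hq0 (t + 1)
      have : 0 ≤ n * R / q 0 * q (t + 1) := by positivity
      linarith) hbar
  set S : ℕ → ℝ := fun k => ∑ t ∈ Finset.range (k + 1), lam ^ (k - t) * q t with hS
  have hS0 : ∀ k, 0 ≤ S k := fun k => Finset.sum_nonneg fun t _ => by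
    have := hq0 t; have := hlam.1; positivity
  have hqS : Summable fun k => q k * S k := summable_conv q hqa hq0 hqs lam hlam.1 hlam.2
  set C : ℝ := σ2 + MG + σ2 * MG + C2 with hC
  have hσM : 0 ≤ (σ2 : ℝ) * MG := by positivity
  have hσ0 : (0 : ℝ) ≤ σ2 := by positivity
  refine lyapunov_converge n hn X hXcomp F L R (F0 + L * (R + R)) hLpos hR (by positivity) hlip
    hmono xs hxs hvi hXR ?_ x z hx α D (α ⟨0, hn⟩) (hα0 _) hα0 hD q S hq0 hqa hqs hS0 hqS C
    (by positivity) ?_ ?_ ?_ ?_ ?_ hdiv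
  · intro i a b ha hb
    refine (hFb i a b).trans ?_
    gcongr
  · intro i k
    have h1 := hqa (Nat.le_succ k)
    calc α i k ≤ σ2 * q (k + 1) := hαq1 i k
      _ ≤ C * q k := mul_le_mul (by linarith) h1 (hq0 _).le (by positivity)
  · intro i k
    refine (hDle i k).trans ?_
    exact mul_le_mul_of_nonneg_right (by linarith) (hq0 k).le
  · intro i k
    refine (hstep i k).trans ?_
    exact mul_le_mul_of_nonneg_right (by linarith) (hq0 _).le
  · intro k i
    refine (hz2 k i).trans ?_
    exact mul_le_mul_of_nonneg_right (by linarith) (hS0 k)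
  · intro i k
    have h1 := (hproj i k).2
    have h2 : (α i k * MG) ^ 2 ≤ (α i k * C) ^ 2 := by
      have := hα0 i k
      gcongr
      linarith
    linarith
end

section
/- (Lemma 2(a)) Under the augmented push-sum dynamics with the ergodicity hypothesis, for every player i ∈ {1,…,n} and every k ≥ 0, ‖z_i(k+1) − x̄(k)‖ ≤ (2B'/(ηλ)) · ( λ^k · n·M + ∑_{t=0}^{k} λ^{k−t} Δ(t) ), where M := max_{1≤i≤n} sup_{x ∈ X_i} ‖x‖. -/
open Filter Topology

theorem aux_sum_dite {E : Type*} [AddCommMonoid E] {n N : ℕ} (hnN : n ≤ N) (f : Fin n → E) :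
    ∑ m : Fin N, (if h : (m : ℕ) < n then f ⟨m, h⟩ else 0) = ∑ j, f j := by
  obtain ⟨d, rfl⟩ := Nat.exists_eq_add_of_le hnN
  rw [Fin.sum_univ_add]
  simp

theorem aux_backProd_succ {N : ℕ} (A : ℕ → Matrix (Fin N) (Fin N) ℝ) (k t : ℕ) :
    backProd A k (t + 1) = backProd A k t * A (k - (t + 1)) := by
  unfold backProd
  rw [List.range_succ (n := t + 1)]
  simp

theorem aux_backProd_zero {N : ℕ} (A : ℕ → Matrix (Fin N) (Fin N) ℝ) (k : ℕ) :
    backProd A k 0 = A k := by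
  simp [backProd]

theorem aux_formula {E : Type*} [NormedAddCommGroup E] [NormedSpace ℝ E] {N : ℕ}
    (A : ℕ → Matrix (Fin N) (Fin N) ℝ) (hAcol : ∀ k j, ∑ i, A k i j = 1)
    (v D : ℕ → Fin N → E)
    (hv : ∀ k j, v (k + 1) j = ∑ m, A k j m • v k m + D k j)
    (k : ℕ) (i : Fin N) (c : ℝ) (s : ℕ) (hs : s ≤ k) :
    ∑ m, A k i m • v k m - c • ∑ m, v k m =
      ∑ m, (backProd A k s i m - c) • v (k - s) m +
        ∑ r ∈ Finset.range s, ∑ m, (backProd A k r i m - c) • D (k - 1 - r) m := by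
  induction s with
  | zero =>
    simp [aux_backProd_zero, sub_smul, Finset.sum_sub_distrib, Finset.smul_sum]
  | succ s ih =>
    rw [ih (by omega), Finset.sum_range_succ, add_comm (Finset.sum (Finset.range s) _), ← add_assoc]
    congr 1
    have e1 : k - s = (k - (s + 1)) + 1 := by omega
    have e2 : k - 1 - s = k - (s + 1) := by omega
    rw [e1, e2]
    generalize hq : k - (s + 1) = q
    have hsum : ∑ m, (backProd A k s i m - c) • ∑ j, A q m j • v q j =
        ∑ m, (backProd A k (s + 1) i m - c) • v q m := by
      simp_rw [Finset.smul_sum]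
      rw [Finset.sum_comm]
      refine Finset.sum_congr rfl fun j _ => ?_
      simp_rw [smul_smul]
      rw [← Finset.sum_smul]
      congr 1
      rw [aux_backProd_succ, Matrix.mul_apply, hq]
      simp_rw [sub_mul]
      rw [Finset.sum_sub_distrib, ← Finset.mul_sum, hAcol, mul_one]
    rw [← hsum, ← Finset.sum_add_distrib]
    refine Finset.sum_congr rfl fun m _ => ?_
    rw [hv, smul_add]

theorem aux_bound {E : Type*} [NormedAddCommGroup E] [NormedSpace ℝ E] {N : ℕ}
    (A : ℕ → Matrix (Fin N) (Fin N) ℝ) (hAcol : ∀ k j, ∑ i, A k i j = 1)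
    (v D : ℕ → Fin N → E)
    (hv : ∀ k j, v (k + 1) j = ∑ m, A k j m • v k m + D k j)
    (k : ℕ) (i : Fin N) (c B lam : ℝ)
    (herg : ∀ t, t ≤ k → ∀ j : Fin N, |backProd A k t i j - c| ≤ B * lam ^ t) :
    ‖∑ m, A k i m • v k m - c • ∑ m, v k m‖ ≤
      B * lam ^ k * ∑ m, ‖v 0 m‖ +
        ∑ t ∈ Finset.range k, B * lam ^ (k - 1 - t) * ∑ m, ‖D t m‖ := by
  have key : ∀ t, t ≤ k → ∀ f : Fin N → E,
      ‖∑ m, (backProd A k t i m - c) • f m‖ ≤ B * lam ^ t * ∑ m, ‖f m‖ := by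
    intro t ht f
    rw [Finset.mul_sum]
    refine norm_sum_le_of_le _ fun m _ => ?_
    rw [norm_smul, Real.norm_eq_abs]
    exact mul_le_mul_of_nonneg_right (herg t ht m) (norm_nonneg _)
  rw [aux_formula A hAcol v D hv k i c k le_rfl,
    ← Finset.sum_range_reflect (fun t => B * lam ^ (k - 1 - t) * ∑ m, ‖D t m‖)]
  refine (norm_add_le _ _).trans (add_le_add ?_ (norm_sum_le_of_le _ fun r hr => ?_))
  · simpa using key k le_rfl (v 0)
  · rw [Finset.mem_range] at hr
    have e : k - 1 - (k - 1 - r) = r := by omega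
    rw [e]
    exact key r hr.le _

theorem aux_final {E : Type*} [NormedAddCommGroup E] [NormedSpace ℝ E]
    (W S : E) (a c n M T B' lam η P : ℝ) (hnpos : 0 < n) (hM0 : 0 ≤ M) (hT0 : 0 ≤ T)
    (hB' : 0 < B') (hl0' : 0 < lam) (hl1 : lam < 1) (hη0 : 0 < η) (hyI : η ≤ a) (hP : 0 < P)
    (hSn : ‖S‖ ≤ n * M) (byy : ‖a - c * n‖ ≤ B' * P * n)
    (h1 : ‖W - c • S‖ ≤ B' * P * (n * M) + B' / lam * T) :
    ‖a⁻¹ • W - n⁻¹ • S‖ ≤ 2 * B' / (η * lam) * (P * n * M + T) := by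
  have hyp : 0 < a := hη0.trans_le hyI
  have hdec : a⁻¹ • W - n⁻¹ • S = a⁻¹ • ((W - c • S) - ((a - c * n) * n⁻¹) • S) := by
    have e : (a - c * n) * n⁻¹ = a * n⁻¹ - c := by
      field_simp
    rw [e, sub_smul, mul_smul, sub_sub_sub_cancel_right, smul_sub, inv_smul_smul₀ hyp.ne']
  have h2 : ‖((a - c * n) * n⁻¹) • S‖ ≤ B' * P * (n * M) := by
    rw [norm_smul, norm_mul, norm_inv, Real.norm_of_nonneg hnpos.le]
    refine mul_le_mul ?_ hSn (norm_nonneg _) (by positivity)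
    rw [← div_eq_mul_inv, div_le_iff₀ hnpos]
    exact byy
  rw [hdec, norm_smul, norm_inv, Real.norm_of_nonneg hyp.le]
  have h3 := (norm_sub_le (W - c • S) (((a - c * n) * n⁻¹) • S)).trans
    (add_le_add h1 h2)
  have h4 : (a)⁻¹ ≤ η⁻¹ := inv_anti₀ hη0 hyI
  have hB1 : B' ≤ B' / lam := by
    rw [le_div_iff₀ hl0']; nlinarith
  have hQ : 0 ≤ P * n * M := by positivity
  calc _ ≤ η⁻¹ * (B' * P * (n * M) + B' / lam * T + B' * P * (n * M)) :=
        mul_le_mul h4 h3 (norm_nonneg _) (by positivity)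
    _ = η⁻¹ * (2 * (B' * (P * n * M)) + B' / lam * T) := by ring
    _ ≤ η⁻¹ * (2 * (B' / lam * (P * n * M)) + 2 * (B' / lam * T)) := by
        have : 0 ≤ B' / lam * T := by positivity
        have hB2 := mul_le_mul_of_nonneg_right hB1 hQ
        refine mul_le_mul_of_nonneg_left ?_ (inv_nonneg.mpr hη0.le)
        linarith
    _ = 2 * B' / (η * lam) * (P * n * M + T) := by
        field_simp

set_option maxHeartbeats 1000000 in
/-- Lemma 2(a): under the augmented push-sum dynamics with the ergodicity hypothesis,
for every player `i` and every `k ≥ 0`,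
`‖z_i(k+1) − x̄(k)‖ ≤ (2B'/(ηλ)) (λ^k n M + ∑_{t=0}^k λ^{k−t} Δ(t))`,
where `M = max_i sup_{x ∈ X_i} ‖x‖` and `Δ(t) = ∑_i ‖x_i(t+1) − x_i(t)‖`. -/
theorem pushsum_consensus_bound
    (n N p : ℕ) (hn : 0 < n) (hnN : n ≤ N)
    (X : Fin n → Set (EuclideanSpace ℝ (Fin p)))
    -- nonempty convex compact action sets
    (hXne : ∀ i, (X i).Nonempty)
    (hXconv : ∀ i, Convex ℝ (X i))
    (hXcomp : ∀ i, IsCompact (X i))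
    -- the game mappings, L-Lipschitz on ℝ^p × ℝ^p
    (F : Fin n → EuclideanSpace ℝ (Fin p) → EuclideanSpace ℝ (Fin p) →
      EuclideanSpace ℝ (Fin p))
    (L : ℝ) (hLpos : 0 < L)
    (hFlip : ∀ i xi xi' z z',
      ‖F i xi z - F i xi' z'‖ ≤ L * Real.sqrt (‖xi - xi'‖ ^ 2 + ‖z - z'‖ ^ 2))
    -- nonnegative column-stochastic matrices
    (A : ℕ → Matrix (Fin N) (Fin N) ℝ)
    (hAnn : ∀ k i j, 0 ≤ A k i j)
    (hAcol : ∀ k j, ∑ i, A k i j = 1)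
    -- states
    (v w : ℕ → Fin N → EuclideanSpace ℝ (Fin p))
    (y : ℕ → Fin N → ℝ)
    (x z : ℕ → Fin n → EuclideanSpace ℝ (Fin p))
    -- initialization
    (hx0 : ∀ i, x 0 i ∈ X i)
    (hv0p : ∀ i : Fin n, v 0 (Fin.castLE hnN i) = x 0 i)
    (hy0p : ∀ i : Fin n, y 0 (Fin.castLE hnN i) = 1)
    (hv0v : ∀ j : Fin N, n ≤ (j : ℕ) → v 0 j = 0)
    (hy0v : ∀ j : Fin N, n ≤ (j : ℕ) → y 0 j = 0)
    -- activation sets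
    (Aset : ℕ → Finset (Fin n))
    (hAsetne : ∀ k, (Aset k).Nonempty)
    (σ1 : ℕ) (hσ1 : 1 ≤ σ1)
    (hcover : ∀ k, ∀ i : Fin n, ∃ u, k + 1 ≤ u ∧ u ≤ k + σ1 ∧ i ∈ Aset u)
    -- counters
    (l : Fin n → ℕ → ℕ) (σ2 : ℕ) (hσ2 : 1 ≤ σ2)
    (hl0 : ∀ i, l i 0 = 0)
    (hlact : ∀ i k, i ∈ Aset k → l i k + 1 ≤ l i (k + 1) ∧ l i (k + 1) ≤ l i k + σ2)
    (hlstay : ∀ i k, i ∉ Aset k → l i (k + 1) = l i k)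
    -- stepsize generating sequence
    (ρ : ℕ → ℝ)
    (hρpos : ∀ t, 0 < ρ t)
    (hρmono : ∀ t, ρ (t + 1) ≤ ρ t)
    (hρsq : Summable fun t => ρ t ^ 2)
    (α : Fin n → ℕ → ℝ)
    (hα : ∀ i k, α i k = ∑ t ∈ Finset.Ico (l i k) (l i (k + 1)), ρ t)
    -- push-sum dynamics
    (hw : ∀ k, ∀ j : Fin N, w (k + 1) j = ∑ m, A k j m • v k m)
    (hy : ∀ k, ∀ j : Fin N, y (k + 1) j = ∑ m, A k j m * y k m)
    (hz : ∀ k, ∀ i : Fin n,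
      z (k + 1) i = (y (k + 1) (Fin.castLE hnN i))⁻¹ • w (k + 1) (Fin.castLE hnN i))
    -- the projected pseudo-gradient update for active players
    (hxup : ∀ k, ∀ i : Fin n, i ∈ Aset k →
      x (k + 1) i ∈ X i ∧
      ∀ u ∈ X i,
        ‖x k i - α i k • F i (x k i) (z (k + 1) i) - x (k + 1) i‖ ≤
        ‖x k i - α i k • F i (x k i) (z (k + 1) i) - u‖)
    (hxstay : ∀ k, ∀ i : Fin n, i ∉ Aset k → x (k + 1) i = x k i)
    (hv : ∀ k, ∀ j : Fin N, v (k + 1) j =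
      w (k + 1) j + (if h : (j : ℕ) < n then x (k + 1) ⟨j, h⟩ - x k ⟨j, h⟩ else 0))
    -- ergodicity hypothesis
    (B' lam η : ℝ) (hB' : 0 < B') (hlam : lam ∈ Set.Ioo (0 : ℝ) 1)
    (hη : η ∈ Set.Ioc (0 : ℝ) 1)
    (φvec : ℕ → Fin N → ℝ)
    (hφnn : ∀ k i, 0 ≤ φvec k i)
    (hφsum : ∀ k, ∑ i, φvec k i = 1)
    (herg : ∀ k t, t ≤ k → ∀ i j : Fin N, |backProd A k t i j - φvec k i| ≤ B' * lam ^ t)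
    (hylb : ∀ i : Fin n, ∀ k, 1 ≤ k → η ≤ y k (Fin.castLE hnN i))
    (M : ℝ) (hM : M = ⨆ i : Fin n, sSup ((fun u => ‖u‖) '' X i)) :
    ∀ i : Fin n, ∀ k : ℕ,
      ‖z (k + 1) i - (n : ℝ)⁻¹ • ∑ j, x k j‖ ≤
        2 * B' / (η * lam) *
          (lam ^ k * n * M +
            ∑ t ∈ Finset.range (k + 1), lam ^ (k - t) * ∑ j, ‖x (t + 1) j - x t j‖) := by
  obtain ⟨hl0', hl1⟩ := hlam
  obtain ⟨hη0, hη1⟩ := hη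
  have hnpos : (0 : ℝ) < n := by exact_mod_cast hn
  intro i k
  have hxX : ∀ k j, x k j ∈ X j := by
    intro k
    induction k with
    | zero => exact hx0
    | succ k ih =>
      intro j
      by_cases h : j ∈ Aset k
      · exact (hxup k j h).1
      · rw [hxstay k j h]; exact ih j
  have hxM : ∀ k j, ‖x k j‖ ≤ M := by
    intro k j
    rw [hM]
    refine le_trans ?_ (le_ciSup (Set.finite_range _).bddAbove j)
    exact le_csSup ((hXcomp j).image continuous_norm).bddAbove ⟨_, hxX k j, rfl⟩
  have hM0 : 0 ≤ M := (norm_nonneg _).trans (hxM 0 i)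
  have hsumM : ∀ k, ∑ j, ‖x k j‖ ≤ n * M := by
    intro k
    calc _ ≤ ∑ _j : Fin n, M := Finset.sum_le_sum fun j _ => hxM k j
      _ = n * M := by simp
  let D : ℕ → Fin N → EuclideanSpace ℝ (Fin p) := fun k j =>
    if h : (j : ℕ) < n then x (k + 1) ⟨j, h⟩ - x k ⟨j, h⟩ else 0
  have hvD : ∀ k j, v (k + 1) j = ∑ m, A k j m • v k m + D k j := by
    intro k j
    rw [hv, hw]
  have hDn : ∀ t, ∑ m, ‖D t m‖ = ∑ j, ‖x (t + 1) j - x t j‖ := by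
    intro t
    rw [← aux_sum_dite hnN]
    refine Finset.sum_congr rfl fun m _ => ?_
    simp only [D]
    split_ifs <;> simp
  have hv0 : ∀ m : Fin N, v 0 m = if h : (m : ℕ) < n then x 0 ⟨m, h⟩ else 0 := by
    intro m
    split_ifs with h
    · exact hv0p ⟨m, h⟩
    · exact hv0v m (by omega)
  have hy0 : ∀ m : Fin N, y 0 m = if h : (m : ℕ) < n then (fun _ : Fin n => (1 : ℝ)) ⟨m, h⟩ else 0 := by
    intro m
    split_ifs with h
    · exact hy0p ⟨m, h⟩
    · exact hy0v m (by omega)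
  have hv0n : ∑ m, ‖v 0 m‖ = ∑ j, ‖x 0 j‖ := by
    rw [← aux_sum_dite hnN]
    refine Finset.sum_congr rfl fun m _ => ?_
    rw [hv0]
    split_ifs <;> simp
  have hy0s : ∑ m, y 0 m = n := by
    rw [Finset.sum_congr rfl fun m _ => hy0 m, aux_sum_dite hnN (fun _ : Fin n => (1 : ℝ))]
    simp
  have hy0n : ∑ m, ‖y 0 m‖ = n := by
    rw [← hy0s]
    refine Finset.sum_congr rfl fun m _ => ?_
    rw [hy0]
    split_ifs <;> simp
  have hcol : ∀ {E : Type} [AddCommGroup E] [Module ℝ E] (k : ℕ) (f : Fin N → E),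
      ∑ j, ∑ m, A k j m • f m = ∑ m, f m := by
    intro E _ _ k f
    rw [Finset.sum_comm]
    refine Finset.sum_congr rfl fun m _ => ?_
    rw [← Finset.sum_smul, hAcol, one_smul]
  have hvs : ∀ k, ∑ m, v k m = ∑ j, x k j := by
    intro k
    induction k with
    | zero => rw [Finset.sum_congr rfl fun m _ => hv0 m, aux_sum_dite hnN]
    | succ k ih =>
      rw [Finset.sum_congr rfl fun m _ => hvD k m, Finset.sum_add_distrib, hcol, ih]
      simp only [D]
      rw [aux_sum_dite hnN (fun j => x (k + 1) j - x k j), Finset.sum_sub_distrib]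
      abel
  have hys : ∀ k, ∑ m, y k m = n := by
    intro k
    induction k with
    | zero => exact hy0s
    | succ k ih =>
      rw [Finset.sum_congr rfl fun m _ => hy k m, ← ih]
      exact hcol k (y k)
  set I := Fin.castLE hnN i with hI
  set c := φvec k I with hc
  have bw := aux_bound A hAcol v D hvD k I c B' lam (fun t ht j => herg k t ht I j)
  have byy := aux_bound A hAcol y (fun _ _ => 0) (fun k j => by simp [hy]) k I c B' lam
    (fun t ht j => herg k t ht I j)
  rw [← hw, hvs, hv0n] at bw
  simp only [smul_eq_mul] at byy
  rw [← hy, hys, hy0n] at byy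
  simp only [norm_zero, Finset.sum_const_zero, mul_zero, add_zero] at byy
  simp only [hDn] at bw
  have hyI : η ≤ y (k + 1) I := hylb i (k + 1) (by omega)
  have hyp : 0 < y (k + 1) I := hη0.trans_le hyI
  set S := ∑ j, x k j with hS
  set T := ∑ t ∈ Finset.range k, lam ^ (k - t) * ∑ j, ‖x (t + 1) j - x t j‖ with hT
  have hTeq : ∑ t ∈ Finset.range k, B' * lam ^ (k - 1 - t) * ∑ j, ‖x (t + 1) j - x t j‖
      = B' / lam * T := by
    rw [hT, Finset.mul_sum]
    refine Finset.sum_congr rfl fun t ht => ?_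
    rw [Finset.mem_range] at ht
    have e : k - t = (k - 1 - t) + 1 := by omega
    rw [e, pow_succ]
    field_simp
  rw [hTeq] at bw
  have hT0 : 0 ≤ T := by
    rw [hT]
    exact Finset.sum_nonneg fun t _ =>
      mul_nonneg (pow_nonneg hl0'.le _) (Finset.sum_nonneg fun _ _ => norm_nonneg _)
  have hSn : ‖S‖ ≤ n * M := (norm_sum_le _ _).trans (hsumM k)
  have h1 : ‖w (k + 1) I - c • S‖ ≤ B' * lam ^ k * (n * M) + B' / lam * T :=
    bw.trans (by gcongr; exact hsumM 0)
  have hfin := aux_final (w (k + 1) I) S (y (k + 1) I) c n M T B' lam η (lam ^ k) hnpos hM0 hT0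
    hB' hl0' hl1 hη0 hyI (pow_pos hl0' k) hSn byy h1
  rw [hz]
  refine hfin.trans (mul_le_mul_of_nonneg_left ?_ (by positivity))
  rw [Finset.sum_range_succ, ← hT]
  have hlast : 0 ≤ lam ^ (k - k) * ∑ j, ‖x (k + 1) j - x k j‖ :=
    mul_nonneg (pow_nonneg hl0'.le _) (Finset.sum_nonneg fun _ _ => norm_nonneg _)
  linarith
end

section
/- (Appendix Lemma 3) Let {x_k}, {u_k}, {w_k} and {v_k} be real sequences such that x_{k+1} ≤ x_k − u_k + w_k + v_k for all k ≥ 0, where x_k ≥ 0, u_k ≥ 0 and w_k ≥ 0 for all k, ∑_{k=0}^∞ w_k < ∞, and the series ∑_{k=0}^∞ v_k converges (its partial sums have a finite limit). Then {x_k} converges to a finite limit and ∑_{k=0}^∞ u_k < ∞. -/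
open Filter Topology

/-- Appendix Lemma 3: if nonnegative sequences satisfy
`x_{k+1} ≤ x_k − u_k + w_k + v_k` with `∑ w_k < ∞` and `∑ v_k` convergent, then
`{x_k}` converges to a finite limit and `∑ u_k < ∞`. -/
theorem supermartingale_type_convergence (x u w v : ℕ → ℝ)
    (hx : ∀ k, 0 ≤ x k) (hu : ∀ k, 0 ≤ u k) (hw : ∀ k, 0 ≤ w k)
    (hrec : ∀ k, x (k + 1) ≤ x k - u k + w k + v k)
    (hwsum : Summable w)
    (hvconv : ∃ S : ℝ, Tendsto (fun K => ∑ k ∈ Finset.range K, v k) atTop (nhds S)) :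
    (∃ Lx : ℝ, Tendsto x atTop (nhds Lx)) ∧ Summable u := by
  obtain ⟨S, hS⟩ := hvconv
  have hW := hwsum.hasSum.tendsto_sum_nat
  have hWV := hW.add hS
  obtain ⟨C, hC⟩ := hWV.bddAbove_range
  have hC' : ∀ n, ∑ k ∈ Finset.range n, w k + ∑ k ∈ Finset.range n, v k ≤ C :=
    fun n => hC ⟨n, rfl⟩
  have key : ∀ n, x n + ∑ k ∈ Finset.range n, u k
      ≤ x 0 + (∑ k ∈ Finset.range n, w k + ∑ k ∈ Finset.range n, v k) := by
    intro n
    induction n with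
    | zero => simp
    | succ n ih =>
      simp only [Finset.sum_range_succ]
      linarith [hrec n]
  have hus : Summable u :=
    summable_of_sum_range_le hu (c := x 0 + C) fun n => by
      linarith [key n, hC' n, hx n]
  refine ⟨?_, hus⟩
  have hU := hus.hasSum.tendsto_sum_nat
  have hanti : Antitone (fun n => x n + ∑ k ∈ Finset.range n, u k
      - (∑ k ∈ Finset.range n, w k + ∑ k ∈ Finset.range n, v k)) := by
    refine antitone_nat_of_succ_le fun n => ?_
    simp only [Finset.sum_range_succ]
    linarith [hrec n]
  have hbdd : BddBelow (Set.range (fun n => x n + ∑ k ∈ Finset.range n, u k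
      - (∑ k ∈ Finset.range n, w k + ∑ k ∈ Finset.range n, v k))) := by
    refine ⟨-C, ?_⟩
    rintro _ ⟨n, rfl⟩
    have := Finset.sum_nonneg (s := Finset.range n) fun k _ => hu k
    simp only
    linarith [hC' n, hx n]
  have hy := tendsto_atTop_ciInf hanti hbdd
  refine ⟨_, ((hy.sub hU).add hWV).congr fun n => ?_⟩
  ring
end

section
/- (Lemma 1(a), activation frequency) Let n ≥ 1 and 0 < τ̲ ≤ τ̄ < ∞. For each i ∈ {1,…,n} let t_i : ℕ → ℝ be strictly increasing with t_i(0) = 0 and τ̲ ≤ t_i(m+1) − t_i(m) ≤ τ̄ for all m ∈ ℕ. Let T := ⋃_{i=1}^n { t_i(m) : m ∈ ℕ } and let t : ℕ → ℝ be a strictly increasing map with range exactly T. Set b₁ := (n−1)·⌈τ̄/τ̲⌉ + 1. Then for every k ≥ 0 and every i ∈ {1,…,n} there exists m ∈ ℕ with t(k) < t_i(m) ≤ t(k + b₁). -/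
/-- Lemma 1(a) (activation frequency): if each player's consecutive activation times
are separated by at least `τlo` and at most `τhi`, and `t` enumerates in increasing
order the merged set of all activation times, then every player is activated at least
once within any window of `b₁ = (n−1)⌈τhi/τlo⌉ + 1` consecutive merged activation
times. -/
theorem activation_frequency (n : ℕ) (hn : 1 ≤ n)
    (τlo τhi : ℝ) (hτlo : 0 < τlo) (hτ : τlo ≤ τhi)
    (ti : Fin n → ℕ → ℝ)
    (hmono : ∀ i, StrictMono (ti i))
    (hzero : ∀ i, ti i 0 = 0)
    (hgap : ∀ i m, τlo ≤ ti i (m + 1) - ti i m ∧ ti i (m + 1) - ti i m ≤ τhi)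
    (t : ℕ → ℝ) (htmono : StrictMono t)
    (hrange : Set.range t = ⋃ i, Set.range (ti i)) :
    ∀ k, ∀ i : Fin n, ∃ m : ℕ,
      t k < ti i m ∧ ti i m ≤ t (k + ((n - 1) * ⌈τhi / τlo⌉₊ + 1)) := by
  have hlin : ∀ j (a d : ℕ), ti j a + (d : ℝ) * τlo ≤ ti j (a + d) := by
    intro j a d
    induction d with
    | zero => simp
    | succ d ih =>
      have := (hgap j (a + d)).1
      rw [← add_assoc]
      push_cast
      linarith
  intro k i
  have hC : τhi ≤ (⌈τhi / τlo⌉₊ : ℝ) * τlo := by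
    have := Nat.le_ceil (τhi / τlo)
    rwa [div_le_iff₀ hτlo] at this
  generalize ⌈τhi / τlo⌉₊ = C at hC ⊢
  have hex : ∀ j, ∃ m, t k < ti j m := by
    intro j
    obtain ⟨d, hd⟩ := exists_nat_gt (t k / τlo)
    rw [div_lt_iff₀ hτlo] at hd
    refine ⟨d, ?_⟩
    have := hlin j 0 d
    rw [hzero, zero_add, zero_add] at this
    linarith
  choose P hP hmin using fun j => (⟨Nat.find (hex j), Nat.find_spec (hex j),
    fun m hm => Nat.find_min' (hex j) hm⟩ :
      ∃ p, t k < ti j p ∧ ∀ m, t k < ti j m → p ≤ m)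
  have hmem : ∀ s, ∃ j p, ti j p = t s := by
    intro s
    have : t s ∈ ⋃ i, Set.range (ti i) := hrange ▸ Set.mem_range_self s
    simpa using this
  have htk : 0 ≤ t k := by
    obtain ⟨j, p, h⟩ := hmem k
    rw [← h, ← hzero j]
    exact (hmono j).monotone (Nat.zero_le p)
  have hup : ti i (P i) ≤ t k + τhi := by
    have h0 : P i ≠ 0 := by
      intro h
      have := hP i
      rw [h, hzero] at this
      linarith
    obtain ⟨q, hq⟩ := Nat.exists_eq_succ_of_ne_zero h0
    have h1 : ti i q ≤ t k := by
      by_contra! h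
      have := hmin i q h
      omega
    have h2 := (hgap i q).2
    rw [hq, Nat.succ_eq_add_one]
    linarith
  refine ⟨P i, hP i, ?_⟩
  by_contra! hlt
  choose J Q hJQ using hmem
  have hw : ∀ s ∈ Finset.range ((n - 1) * C + 1),
      t k < t (k + (s + 1)) ∧ t (k + (s + 1)) < ti i (P i) := by
    intro s hs
    rw [Finset.mem_range] at hs
    refine ⟨htmono (by omega), lt_of_le_of_lt (htmono.monotone ?_) hlt⟩
    omega
  have hPQ : ∀ s ∈ Finset.range ((n - 1) * C + 1),
      P (J (k + (s + 1))) ≤ Q (k + (s + 1)) := by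
    intro s hs
    apply hmin
    rw [hJQ]
    exact (hw s hs).1
  have hcard := Finset.card_le_card_of_injOn
    (s := Finset.range ((n - 1) * C + 1))
    (t := (Finset.univ.erase i) ×ˢ Finset.range C)
    (fun s => (J (k + (s + 1)), Q (k + (s + 1)) - P (J (k + (s + 1)))))
    (by
      intro s hs
      have hs : s ∈ Finset.range ((n - 1) * C + 1) := by simpa using hs
      have h1 := hw s hs
      have h2 := hPQ s hs
      have h3 := hJQ (k + (s + 1))
      simp only [Finset.coe_product, Set.mem_prod, Finset.mem_coe, Finset.mem_erase,
        Finset.mem_univ, and_true, Finset.mem_range]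
      constructor
      · intro hji
        rw [hji] at h2 h3
        have := (hmono i).monotone h2
        linarith
      · by_contra! hge
        have h4 := hlin (J (k + (s + 1))) (P (J (k + (s + 1)))) C
        have h5 : ti (J (k + (s + 1))) (P (J (k + (s + 1))) + C) ≤
            ti (J (k + (s + 1))) (Q (k + (s + 1))) := (hmono _).monotone (by omega)
        have h6 := hP (J (k + (s + 1)))
        linarith)
    (by
      intro s hs r hr h
      have hs := hPQ s (by simpa using hs)
      have hr := hPQ r (by simpa using hr)
      simp only [Prod.mk.injEq] at h
      obtain ⟨h1, h2⟩ := h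
      rw [h1] at hs h2
      have hQ : Q (k + (s + 1)) = Q (k + (r + 1)) := by omega
      have : t (k + (s + 1)) = t (k + (r + 1)) := by
        rw [← hJQ (k + (s + 1)), ← hJQ (k + (r + 1)), h1, hQ]
      have := htmono.injective this
      omega)
  simp [Finset.card_product, Finset.card_erase_of_mem] at hcard
end

section
/- Let σ ≥ 1 be an integer, let ρ : ℕ → ℝ be nonnegative with ∑_{t=0}^∞ ρ(t)² < ∞, and let r̃ : ℕ → ℕ be nondecreasing such that r̃(k+t) − r̃(k) ≤ tσ for all k, t ≥ 0 and r̃(k + σ² + σ) ≥ r̃(k + σ) + σ for all k ≥ 0. Then ∑_{k=0}^{∞} ( ∑_{t = r̃(k) ∸ σ}^{ r̃(k+σ) − 1 } ρ(t) )² ≤ σ²(σ+1)² ∑_{t=0}^{∞} ρ(t)², where m ∸ σ denotes truncated subtraction max(m − σ, 0). -/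
/-- Summability of the accumulated squared stepsize windows: if `σ ≥ 1`, `ρ ≥ 0` with
`∑ ρ(t)² < ∞`, and the nondecreasing counter `r̃` grows by at most `σ` per step and
satisfies `r̃(k+σ²+σ) ≥ r̃(k+σ) + σ`, then
`∑_k (∑_{t=r̃(k)∸σ}^{r̃(k+σ)−1} ρ(t))² ≤ σ²(σ+1)² ∑_t ρ(t)²` (truncated subtraction). -/
theorem stepsize_window_square_summable (σ : ℕ) (hσ : 1 ≤ σ)
    (ρ : ℕ → ℝ) (hρ : ∀ t, 0 ≤ ρ t)
    (hρsq : Summable fun t => ρ t ^ 2)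
    (r : ℕ → ℕ) (hrmono : Monotone r)
    (hgrow : ∀ k t, r (k + t) - r k ≤ t * σ)
    (hsep : ∀ k, r (k + σ) + σ ≤ r (k + σ ^ 2 + σ)) :
    Summable (fun k => (∑ t ∈ Finset.Ico (r k - σ) (r (k + σ)), ρ t) ^ 2) ∧
    ∑' k, (∑ t ∈ Finset.Ico (r k - σ) (r (k + σ)), ρ t) ^ 2 ≤
      (σ : ℝ) ^ 2 * ((σ : ℝ) + 1) ^ 2 * ∑' t, ρ t ^ 2 := by
  have hN : σ ^ 2 = σ * σ := by ring
  have hcount : ∀ n t : ℕ, ((Finset.range n).filter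
      (fun k => r k - σ ≤ t ∧ t < r (k + σ))).card ≤ σ * σ + σ := by
    intro n t
    by_cases hex : ∃ k, t < r (k + σ)
    · classical
      let m := Nat.find hex
      have hm : t < r (m + σ) := Nat.find_spec hex
      have hsub : (Finset.range n).filter (fun k => r k - σ ≤ t ∧ t < r (k + σ)) ⊆
          Finset.Ico m (m + (σ * σ + σ)) := by
        intro k hk
        simp only [Finset.mem_filter, Finset.mem_Ico] at hk ⊢
        refine ⟨Nat.find_min' hex hk.2.2, ?_⟩
        by_contra hcon
        have h1 : r (m + σ ^ 2 + σ) ≤ r k := hrmono (by rw [hN]; omega)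
        have h2 := hsep m
        omega
      simpa using Finset.card_le_card hsub
    · push Not at hex
      rw [Finset.filter_false_of_mem]
      · simp
      · intro k _ hk
        exact absurd hk.2 (not_lt.mpr (hex k))
  have hwin : ∀ k, (∑ t ∈ Finset.Ico (r k - σ) (r (k + σ)), ρ t) ^ 2 ≤
      ((σ : ℝ) * σ + σ) * ∑ t ∈ Finset.Ico (r k - σ) (r (k + σ)), ρ t ^ 2 := by
    intro k
    refine (sq_sum_le_card_mul_sum_sq).trans ?_
    refine mul_le_mul_of_nonneg_right ?_ (Finset.sum_nonneg fun _ _ => sq_nonneg _)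
    have h := hgrow k σ
    rw [Nat.card_Ico]
    have h2 : r (k + σ) - (r k - σ) ≤ σ * σ + σ := by omega
    exact_mod_cast h2
  have hC : (0 : ℝ) ≤ (σ : ℝ) * σ + σ := by positivity
  have hpart : ∀ n, ∑ k ∈ Finset.range n,
      (∑ t ∈ Finset.Ico (r k - σ) (r (k + σ)), ρ t) ^ 2 ≤
      (σ : ℝ) ^ 2 * ((σ : ℝ) + 1) ^ 2 * ∑' t, ρ t ^ 2 := by
    intro n
    have hswap : ∑ k ∈ Finset.range n, ∑ t ∈ Finset.Ico (r k - σ) (r (k + σ)), ρ t ^ 2 =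
        ∑ t ∈ Finset.range (r (n + σ)), ∑ k ∈ (Finset.range n).filter
          (fun k => r k - σ ≤ t ∧ t < r (k + σ)), ρ t ^ 2 := by
      apply Finset.sum_comm'
      intro k t
      simp only [Finset.mem_filter, Finset.mem_Ico, Finset.mem_range]
      constructor
      · rintro ⟨h1, h2⟩
        exact ⟨⟨h1, h2⟩, h2.2.trans_le (hrmono (by omega))⟩
      · rintro ⟨h, _⟩
        exact h
    calc _ ≤ ∑ k ∈ Finset.range n, ((σ : ℝ) * σ + σ) *
            ∑ t ∈ Finset.Ico (r k - σ) (r (k + σ)), ρ t ^ 2 :=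
          Finset.sum_le_sum fun k _ => hwin k
      _ = ((σ : ℝ) * σ + σ) * ∑ t ∈ Finset.range (r (n + σ)), ∑ k ∈ (Finset.range n).filter
          (fun k => r k - σ ≤ t ∧ t < r (k + σ)), ρ t ^ 2 := by
          rw [← Finset.mul_sum, hswap]
      _ ≤ ((σ : ℝ) * σ + σ) * ∑ t ∈ Finset.range (r (n + σ)), ((σ : ℝ) * σ + σ) * ρ t ^ 2 := by
          refine mul_le_mul_of_nonneg_left (Finset.sum_le_sum fun t _ => ?_) hC
          rw [Finset.sum_const, nsmul_eq_mul]
          refine mul_le_mul_of_nonneg_right ?_ (sq_nonneg _)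
          exact_mod_cast hcount n t
      _ = (σ : ℝ) ^ 2 * ((σ : ℝ) + 1) ^ 2 * ∑ t ∈ Finset.range (r (n + σ)), ρ t ^ 2 := by
          rw [← Finset.mul_sum]; ring
      _ ≤ _ := by
          refine mul_le_mul_of_nonneg_left ?_ (by positivity)
          exact hρsq.sum_le_tsum _ fun _ _ => sq_nonneg _
  exact ⟨summable_of_sum_range_le (fun _ => sq_nonneg _) hpart,
    Real.tsum_le_of_sum_range_le (fun _ => sq_nonneg _) hpart⟩
end
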